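/- arXiv:1906.04938 — 4 statements merged into one kernel-verified Lean document; each statement's English description precedes it below -/
import Mathlib

section
/- There exists a continuously differentiable function ψ : [0,∞) → ℝ with ψ(0) = 0 which is bounded from above, satisfies the equation -((n-1)/r)·ψ'(r) - |ψ'(r)| = h(r) for every r ∈ (0,∞), and has linear growth at infinity in the sense that ψ(r)/(1+r) → -c as r → ∞; in particular the limit lim_{r→∞} ψ(r)/(1+r) exists and is negative. -/
open Set Filter Topology

/-- `ψ` is a viscosity subsolution of (E): `-((n-1)/r)·ψ'(r) - |ψ'(r)| = h(r)`
on an open set `I ⊆ (0,∞)`: for every test function `φ` differentiable on `(0,∞)`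
and every `r₀ ∈ I` at which `ψ - φ` attains a local maximum, the subsolution
inequality holds. -/
def ViscSubsolE (n : ℕ) (h : ℝ → ℝ) (I : Set ℝ) (ψ : ℝ → ℝ) : Prop :=
  ∀ φ : ℝ → ℝ, DifferentiableOn ℝ φ (Set.Ioi 0) →
    ∀ r₀ ∈ I, IsLocalMax (fun r => ψ r - φ r) r₀ →
      -(((n : ℝ) - 1) / r₀) * deriv φ r₀ - |deriv φ r₀| ≤ h r₀

/-- Viscosity supersolution of (E) on an open set `I ⊆ (0,∞)`. -/
def ViscSupersolE (n : ℕ) (h : ℝ → ℝ) (I : Set ℝ) (ψ : ℝ → ℝ) : Prop :=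
  ∀ φ : ℝ → ℝ, DifferentiableOn ℝ φ (Set.Ioi 0) →
    ∀ r₀ ∈ I, IsLocalMin (fun r => ψ r - φ r) r₀ →
      -(((n : ℝ) - 1) / r₀) * deriv φ r₀ - |deriv φ r₀| ≥ h r₀

/-- Viscosity solution of (E): both a subsolution and a supersolution. -/
def ViscSolE (n : ℕ) (h : ℝ → ℝ) (I : Set ℝ) (ψ : ℝ → ℝ) : Prop :=
  ViscSubsolE n h I ψ ∧ ViscSupersolE n h I ψ

/-!
Write `m = n - 1`, `h = f̃ - c` and `ψ'(r) = r q(r)`: the equation becomes `-m q - r |q| = h`. It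
has the root `q = -h / (m + r) ≥ 0` where `h ≤ 0`, and the root `q = h / (r - m) ≤ 0` where
`h / (r - m) ≤ 0`. Left of `m` the sign of `h` dictates which one to take; right of `m` both exist
because `h ≤ 0`, and one may pass from the first to the second at a zero `s ≥ m` of `h`. If
`h m = 0`, then taking `s = m` makes the two choices fit together continuously because `h` is
differentiable at `m`. Past `s` the solution decreases, and `ψ' = r h / (r - m)` has the same limit
as `h`.
-/

open Asymptotics

section Calculus

variable {E : Type*} [NormedAddCommGroup E] [NormedSpace ℝ E]

lemma isLittleO_id_atTop_of_tendsto_hasDerivAt {f f' : ℝ → E}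
    (hf : ∀ᶠ x in atTop, HasDerivAt f (f' x) x) (hf' : Tendsto f' atTop (𝓝 0)) :
    f =o[atTop] (id : ℝ → ℝ) := by
  refine isLittleO_iff.2 fun ε hε => ?_
  have hbound : ∀ᶠ x in atTop, ‖f' x‖ ≤ ε / 2 :=
    hf'.norm.eventually_le_const (by simpa using half_pos hε)
  obtain ⟨a, ha⟩ := eventually_atTop.1 (hf.and (hbound.and (eventually_ge_atTop 0)))
  have hconst : ∀ᶠ x in atTop, ‖f a‖ ≤ ε / 2 * ‖(id x : ℝ)‖ :=
    (isLittleO_const_id_atTop (f a)).bound (half_pos hε)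
  filter_upwards [hconst, eventually_ge_atTop a] with x hxconst hax
  have ha0 : 0 ≤ a := (ha a le_rfl).2.2
  have hmvt : ‖f x - f a‖ ≤ ε / 2 * ‖x - a‖ :=
    Convex.norm_image_sub_le_of_norm_hasDerivWithin_le
      (fun y hy => (ha y hy).1.hasDerivWithinAt) (fun y hy => (ha y hy).2.1) (convex_Ici a)
      self_mem_Ici hax
  have hxa : ‖x - a‖ ≤ ‖x‖ := abs_le_abs_of_nonneg (sub_nonneg.2 hax) (sub_le_self x ha0)
  calc ‖f x‖ ≤ ‖f a‖ + ‖f x - f a‖ := norm_le_insert' _ _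
    _ ≤ ε / 2 * ‖x‖ + ε / 2 * ‖x‖ := add_le_add hxconst (hmvt.trans (by gcongr))
    _ = ε * ‖id x‖ := by rw [id]; ring

lemma tendsto_div_const_add_of_tendsto_hasDerivAt {f f' : ℝ → ℝ} {L : ℝ} (b : ℝ)
    (hf : ∀ᶠ x in atTop, HasDerivAt f (f' x) x) (hf' : Tendsto f' atTop (𝓝 L)) :
    Tendsto (fun x => f x / (b + x)) atTop (𝓝 L) := by
  have hsub : (fun x => f x - L * (b + x)) =o[atTop] (id : ℝ → ℝ) := by
    refine isLittleO_id_atTop_of_tendsto_hasDerivAt (f' := fun x => f' x - L) ?_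
      (by simpa using hf'.sub_const L)
    filter_upwards [hf] with x hx
    simpa using hx.fun_sub (((hasDerivAt_id x).const_add b).const_mul L)
  have hid : (id : ℝ → ℝ) =O[atTop] fun x => b + x := by
    simpa using (isLittleO_const_id_atTop b).right_isBigO_add
  have hlim := (hsub.trans_isBigO hid).tendsto_div_nhds_zero.add_const L
  rw [zero_add] at hlim
  refine hlim.congr' ?_
  filter_upwards [eventually_gt_atTop (-b)] with x hx
  have hbx : b + x ≠ 0 := by linarith
  field_simp
  ring

lemma exists_contDiff_primitive [CompleteSpace E] {f : ℝ → E} {a : ℝ}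
    (hf : ContinuousOn f (Ici a)) :
    ∃ F : ℝ → E, ContDiff ℝ 1 F ∧ F a = 0 ∧ ∀ x ∈ Ici a, HasDerivAt F (f x) x := by
  have hcont : Continuous fun x => f (max a x) :=
    hf.comp_continuous (by fun_prop) fun x => le_max_left a x
  have hderiv (x : ℝ) : HasDerivAt (fun y => ∫ t in a..y, f (max a t)) (f (max a x)) x :=
    (hcont.integral_hasStrictDerivAt a x).hasDerivAt
  refine ⟨fun y => ∫ t in a..y, f (max a t), ?_, intervalIntegral.integral_same, fun x hx => ?_⟩
  · exact contDiff_one_iff_deriv.2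
      ⟨fun x => (hderiv x).differentiableAt, by simpa only [funext fun x => (hderiv x).deriv]⟩
  · simpa only [max_eq_right (mem_Ici.1 hx)] using hderiv x

lemma bddAbove_image_Ici_of_antitoneOn {f : ℝ → ℝ} {a b : ℝ} (hab : a ≤ b)
    (hf : ContinuousOn f (Icc a b)) (hanti : AntitoneOn f (Ici b)) :
    BddAbove (f '' Ici a) := by
  rw [← Icc_union_Ici_eq_Ici hab, image_union]
  exact (isCompact_Icc.bddAbove_image hf).union (hanti.map_isLeast isLeast_Ici).bddAbove

lemma dslope_nonpos_of_sub_mul_sub_nonpos {f : ℝ → ℝ} {a : ℝ} (hf : DifferentiableAt ℝ f a)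
    (hsign : ∀ x, (f x - f a) * (x - a) ≤ 0) (x : ℝ) : dslope f a x ≤ 0 := by
  have hslope (y : ℝ) : slope f a y ≤ 0 := by
    rw [slope_def_field]
    exact div_nonpos_iff.2 (mul_nonpos_iff.1 (hsign y))
  rcases eq_or_ne x a with rfl | hx
  · rw [dslope_same]
    exact le_of_tendsto hf.hasDerivAt.tendsto_slope (Eventually.of_forall hslope)
  · exact dslope_of_ne f hx ▸ hslope x

end Calculus

lemma neg_div_mul_sub_abs_of_mul_eq_zero {m r a b : ℝ} (hr : 0 < r) (hmr : 0 < m + r)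
    (ha : 0 ≤ a) (hb : b ≤ 0) (hab : a * b = 0) :
    -(m / r) * (r * (a / (m + r) + b)) - |r * (a / (m + r) + b)| = (r - m) * b - a := by
  rcases mul_eq_zero.1 hab with rfl | rfl
  · rw [zero_div, zero_add, abs_of_nonpos (mul_nonpos_of_nonneg_of_nonpos hr.le hb)]
    field_simp
    ring
  · rw [add_zero, abs_of_nonneg (by positivity)]
    field_simp
    ring

/-- `s` is a point at which the radial slope of a solution of `-(m/r) ψ' - |ψ'| = h` can turn
negative for good: a zero of `h` beyond `m`, which has to be `m` itself if `h` vanishes there. -/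
structure IsTurningPoint (h : ℝ → ℝ) (m s : ℝ) : Prop where
  le : m ≤ s
  nonpos : ∀ r ∈ Ici m, h r ≤ 0
  apply_eq_zero : h s = 0
  eq_of_apply_eq_zero : h m = 0 → s = m

/-- The part of `-h` that is produced by the nonnegative values of `ψ'`, for the solution `ψ` of
`-(m/r) ψ' - |ψ'| = h` turning at `s`. It vanishes beyond `s` when `h s = 0`. -/
noncomputable def risingPart (h : ℝ → ℝ) (s r : ℝ) : ℝ := (h (min r s))⁻

/-- The part of `h` that is produced by the nonpositive values of `ψ'`, for the solution `ψ` of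
`-(m/r) ψ' - |ψ'| = h` turning at `s`. -/
noncomputable def fallingPart (h : ℝ → ℝ) (s r : ℝ) : ℝ := h r + risingPart h s r

/-- The quotient `ψ'(r) / r` for the solution `ψ` of `-(m/r) ψ' - |ψ'| = h` turning at `s`. When
`fallingPart h s` vanishes at `m`, the second term is `fallingPart h s r / (r - m)`, continued to
`r = m` by its derivative. -/
noncomputable def radialSlope (h : ℝ → ℝ) (m s r : ℝ) : ℝ :=
  risingPart h s r / (m + r) + dslope (fallingPart h s) m r

lemma exists_isTurningPoint {f : ℝ → ℝ} {m c : ℝ} (hc : IsGreatest (f '' Ici m) c) :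
    ∃ s, IsTurningPoint (fun r => f r - c) m s := by
  have hnonpos : ∀ r ∈ Ici m, f r - c ≤ 0 := fun r hr =>
    sub_nonpos.2 (hc.2 (mem_image_of_mem f hr))
  by_cases hm : f m - c = 0
  · exact ⟨m, le_rfl, hnonpos, hm, fun _ => rfl⟩
  · obtain ⟨s, hs, hsc⟩ := hc.1
    exact ⟨s, hs, hnonpos, sub_eq_zero.2 hsc, fun h => absurd h hm⟩

section Parts

variable {h : ℝ → ℝ} {s r : ℝ}

lemma risingPart_nonneg (h : ℝ → ℝ) (s r : ℝ) : 0 ≤ risingPart h s r := negPart_nonneg _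

lemma risingPart_of_le (hr : r ≤ s) : risingPart h s r = (h r)⁻ := by
  rw [risingPart, min_eq_left hr]

lemma fallingPart_of_le (hr : r ≤ s) : fallingPart h s r = (h r)⁺ := by
  rw [fallingPart, risingPart_of_le hr]
  exact (sub_eq_iff_eq_add.1 (posPart_sub_negPart (h r))).symm

lemma continuousOn_risingPart (hh : ContinuousOn h (Ici 0)) (hs : 0 ≤ s) :
    ContinuousOn (risingPart h s) (Ici 0) := by
  have hmin : ContinuousOn (fun r => h (min r s)) (Ici 0) :=
    hh.comp (by fun_prop) fun r hr => le_min hr hs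
  exact hmin.neg.sup continuousOn_const

end Parts

namespace IsTurningPoint

variable {h : ℝ → ℝ} {m s r : ℝ}

lemma risingPart_of_ge (hs : IsTurningPoint h m s) (hr : s ≤ r) : risingPart h s r = 0 := by
  rw [risingPart, min_eq_right hr, hs.apply_eq_zero, negPart_zero]

lemma fallingPart_of_ge (hs : IsTurningPoint h m s) (hr : s ≤ r) : fallingPart h s r = h r := by
  rw [fallingPart, hs.risingPart_of_ge hr, add_zero]

lemma risingPart_mul_fallingPart (hs : IsTurningPoint h m s) (r : ℝ) :
    risingPart h s r * fallingPart h s r = 0 := by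
  rcases le_total r s with hr | hr
  · rw [risingPart_of_le hr, fallingPart_of_le hr]
    rcases le_total 0 (h r) with h0 | h0
    · rw [negPart_of_nonneg h0, zero_mul]
    · rw [posPart_of_nonpos h0, mul_zero]
  · rw [hs.risingPart_of_ge hr, zero_mul]

lemma fallingPart_self (hs : IsTurningPoint h m s) : fallingPart h s m = 0 := by
  rw [fallingPart_of_le hs.le, posPart_of_nonpos (hs.nonpos m self_mem_Ici)]

lemma fallingPart_mul_sub_nonpos (hs : IsTurningPoint h m s) (r : ℝ) :
    fallingPart h s r * (r - m) ≤ 0 := by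
  rcases le_total r m with hr | hr
  · rw [fallingPart_of_le (hr.trans hs.le)]
    exact mul_nonpos_of_nonneg_of_nonpos (posPart_nonneg _) (sub_nonpos.2 hr)
  · refine mul_nonpos_of_nonpos_of_nonneg ?_ (sub_nonneg.2 hr)
    rcases le_total r s with hrs | hrs
    · exact (fallingPart_of_le hrs).trans_le (posPart_of_nonpos (hs.nonpos r hr)).le
    · exact (hs.fallingPart_of_ge hrs).trans_le (hs.nonpos r hr)

lemma fallingPart_eventuallyEq_zero (hs : IsTurningPoint h m s) (hm : h m < 0)
    (hh : ContinuousAt h m) : fallingPart h s =ᶠ[𝓝 m] 0 := by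
  have hms : m < s := hs.le.lt_of_ne fun hms => (hms ▸ hm).ne hs.apply_eq_zero
  filter_upwards [hh.eventually_lt_const hm, Iio_mem_nhds hms] with r hr hrs
  rw [fallingPart_of_le hrs.le, posPart_of_nonpos hr.le, Pi.zero_apply]

lemma slope_fallingPart (hs : IsTurningPoint h m s) (hm : h m = 0) (hr : r ≠ m) :
    slope (fallingPart h s) m r = min (slope h m r) 0 := by
  obtain rfl : s = m := hs.eq_of_apply_eq_zero hm
  rw [slope_def_field, slope_def_field, hs.fallingPart_self, hm, sub_zero, sub_zero]
  rcases hr.lt_or_gt with hr | hr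
  · have hden : r - s ≤ 0 := sub_nonpos.2 hr.le
    rw [fallingPart_of_le hr.le]
    rcases le_total 0 (h r) with h0 | h0
    · rw [posPart_of_nonneg h0, min_eq_left (div_nonpos_of_nonneg_of_nonpos h0 hden)]
    · rw [posPart_of_nonpos h0, min_eq_right (div_nonneg_of_nonpos h0 hden), zero_div]
  · rw [hs.fallingPart_of_ge hr.le, min_eq_left]
    exact div_nonpos_of_nonpos_of_nonneg (hs.nonpos r hr.le) (sub_nonneg.2 hr.le)

lemma differentiableAt_fallingPart (hs : IsTurningPoint h m s) (hh : DifferentiableAt ℝ h m) :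
    DifferentiableAt ℝ (fallingPart h s) m := by
  rcases (hs.nonpos m self_mem_Ici).lt_or_eq with hm | hm
  · exact (differentiableAt_const 0).congr_of_eventuallyEq
      (hs.fallingPart_eventuallyEq_zero hm hh.continuousAt)
  · have hslope : Tendsto (slope (fallingPart h s) m) (𝓝[≠] m) (𝓝 (min (deriv h m) 0)) :=
      (hh.hasDerivAt.tendsto_slope.min tendsto_const_nhds).congr'
        (eventually_mem_nhdsWithin.mono fun r hr => (hs.slope_fallingPart hm hr).symm)
    exact (hasDerivAt_iff_tendsto_slope.2 hslope).differentiableAt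

lemma sub_mul_dslope_fallingPart (hs : IsTurningPoint h m s) (r : ℝ) :
    (r - m) * dslope (fallingPart h s) m r = fallingPart h s r := by
  rw [← smul_eq_mul, sub_smul_dslope, hs.fallingPart_self, sub_zero]

lemma dslope_fallingPart_nonpos (hs : IsTurningPoint h m s) (hh : DifferentiableAt ℝ h m)
    (r : ℝ) : dslope (fallingPart h s) m r ≤ 0 :=
  dslope_nonpos_of_sub_mul_sub_nonpos (hs.differentiableAt_fallingPart hh)
    (fun x => by simpa [hs.fallingPart_self] using hs.fallingPart_mul_sub_nonpos x) r

lemma risingPart_mul_dslope_fallingPart (hs : IsTurningPoint h m s) (hh : ContinuousAt h m)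
    (r : ℝ) : risingPart h s r * dslope (fallingPart h s) m r = 0 := by
  rcases eq_or_ne r m with rfl | hr
  · rcases (hs.nonpos r self_mem_Ici).lt_or_eq with hm | hm
    · rw [dslope_same, (hs.fallingPart_eventuallyEq_zero hm hh).deriv_eq]
      simp
    · rw [risingPart_of_le hs.le, hm, negPart_zero, zero_mul]
  · refine (mul_eq_zero.1 ?_).resolve_left (sub_ne_zero.2 hr)
    rw [mul_left_comm, hs.sub_mul_dslope_fallingPart, hs.risingPart_mul_fallingPart]

lemma neg_div_mul_sub_abs_mul_radialSlope (hs : IsTurningPoint h m s) (hh : DifferentiableAt ℝ h m)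
    (hr : 0 < r) (hmr : 0 < m + r) :
    -(m / r) * (r * radialSlope h m s r) - |r * radialSlope h m s r| = h r := by
  rw [radialSlope, neg_div_mul_sub_abs_of_mul_eq_zero hr hmr (risingPart_nonneg h s r)
    (hs.dslope_fallingPart_nonpos hh r) (hs.risingPart_mul_dslope_fallingPart hh.continuousAt r),
    hs.sub_mul_dslope_fallingPart, fallingPart, add_sub_cancel_right]

lemma continuousOn_radialSlope (hs : IsTurningPoint h m s) (hm : 0 < m)
    (hcont : ContinuousOn h (Ici 0)) (hh : DifferentiableAt ℝ h m) :
    ContinuousOn (radialSlope h m s) (Ici 0) := by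
  have hrising : ContinuousOn (risingPart h s) (Ici 0) :=
    continuousOn_risingPart hcont (hm.le.trans hs.le)
  have hfalling : ContinuousOn (dslope (fallingPart h s) m) (Ici 0) :=
    (continuousOn_dslope (Ici_mem_nhds hm)).2
      ⟨hcont.add hrising, hs.differentiableAt_fallingPart hh⟩
  exact (hrising.div (by fun_prop) fun r hr => (add_pos_of_pos_of_nonneg hm hr).ne').add hfalling

lemma radialSlope_nonpos_of_ge (hs : IsTurningPoint h m s) (hh : DifferentiableAt ℝ h m)
    (hr : s ≤ r) : radialSlope h m s r ≤ 0 := by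
  rw [radialSlope, hs.risingPart_of_ge hr, zero_div, zero_add]
  exact hs.dslope_fallingPart_nonpos hh r

lemma radialSlope_of_gt (hs : IsTurningPoint h m s) (hr : s < r) :
    radialSlope h m s r = h r / (r - m) := by
  have hrm : r ≠ m := (hs.le.trans_lt hr).ne'
  rw [radialSlope, hs.risingPart_of_ge hr.le, zero_div, zero_add, dslope_of_ne _ hrm,
    slope_def_field, hs.fallingPart_of_ge hr.le, hs.fallingPart_self, sub_zero]

lemma tendsto_mul_radialSlope (hs : IsTurningPoint h m s) {L : ℝ} (hL : Tendsto h atTop (𝓝 L)) :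
    Tendsto (fun r => r * radialSlope h m s r) atTop (𝓝 L) := by
  have hratio : Tendsto (fun r => r / (r - m)) atTop (𝓝 1) := by
    simpa only [neg_add_eq_sub, id] using tendsto_div_const_add_of_tendsto_hasDerivAt (-m)
      (Eventually.of_forall hasDerivAt_id) tendsto_const_nhds
  have hmul := hratio.mul hL
  rw [one_mul] at hmul
  refine hmul.congr' ?_
  filter_upwards [eventually_gt_atTop s] with r hr
  rw [hs.radialSlope_of_gt hr, div_mul_eq_mul_div, mul_div_assoc]

end IsTurningPoint

theorem stmt_0_general {m : ℝ} (hm : 0 < m) {f : ℝ → ℝ} (hcont : ContinuousOn f (Ici 0))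
    (hdiff : DifferentiableAt ℝ f m) {c L : ℝ} (hc : IsGreatest (f '' Ici m) c)
    (hL : Tendsto f atTop (𝓝 L)) :
    ∃ ψ : ℝ → ℝ,
      ContDiffOn ℝ 1 ψ (Ici 0) ∧
      ψ 0 = 0 ∧
      BddAbove (ψ '' Ici 0) ∧
      (∀ r ∈ Ioi (0 : ℝ), -(m / r) * deriv ψ r - |deriv ψ r| = f r - c) ∧
      Tendsto (fun r => ψ r / (1 + r)) atTop (𝓝 (L - c)) := by
  obtain ⟨s, hs⟩ := exists_isTurningPoint hc
  have hs0 : 0 ≤ s := hm.le.trans hs.le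
  have hdiff' : DifferentiableAt ℝ (fun r => f r - c) m := hdiff.sub_const c
  obtain ⟨ψ, hψ, hψ0, hderiv⟩ := exists_contDiff_primitive <|
    continuousOn_id.mul (hs.continuousOn_radialSlope hm (hcont.sub continuousOn_const) hdiff')
  have hanti : AntitoneOn ψ (Ici s) := by
    refine antitoneOn_of_hasDerivWithinAt_nonpos (convex_Ici s) hψ.continuous.continuousOn
      (fun r hr => (hderiv r (hs0.trans (interior_subset hr))).hasDerivWithinAt) fun r hr => ?_
    have hsr : s ≤ r := interior_subset hr
    exact mul_nonpos_of_nonneg_of_nonpos (hs0.trans hsr) (hs.radialSlope_nonpos_of_ge hdiff' hsr)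
  refine ⟨ψ, hψ.contDiffOn, hψ0,
    bddAbove_image_Ici_of_antitoneOn hs0 hψ.continuous.continuousOn hanti, fun r hr => ?_, ?_⟩
  · rw [(hderiv r (mem_Ioi.1 hr).le).deriv]
    exact hs.neg_div_mul_sub_abs_mul_radialSlope hdiff' hr (add_pos hm hr)
  · exact tendsto_div_const_add_of_tendsto_hasDerivAt 1
      ((eventually_ge_atTop 0).mono hderiv) (hs.tendsto_mul_radialSlope (hL.sub_const c))

/-- Existence of a `C¹` solution `ψ` of (E) on `(0,∞)` with `ψ(0)=0`,
bounded from above, with linear growth: `ψ(r)/(1+r) → -c < 0` as `r → ∞`. -/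
theorem stmt_0 (n : ℕ) (hn : 2 ≤ n) (ftilde : ℝ → ℝ)
    (hfC1 : ContDiffOn ℝ 1 ftilde (Set.Ici 0))
    (hfnonneg : ∀ r ∈ Set.Ici (0 : ℝ), 0 ≤ ftilde r)
    (hfsupp : ∃ R : ℝ, 0 < R ∧ ∀ r ≥ R, ftilde r = 0)
    (c : ℝ) (hc : IsGreatest (ftilde '' Set.Ici ((n : ℝ) - 1)) c) (hcpos : 0 < c) :
    ∃ ψ : ℝ → ℝ,
      ContDiffOn ℝ 1 ψ (Set.Ici 0) ∧
      ψ 0 = 0 ∧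
      BddAbove (ψ '' Set.Ici 0) ∧
      (∀ r ∈ Set.Ioi (0 : ℝ),
        -(((n : ℝ) - 1) / r) * deriv ψ r - |deriv ψ r| = ftilde r - c) ∧
      Filter.Tendsto (fun r => ψ r / (1 + r)) Filter.atTop (nhds (-c)) ∧
      -c < 0 := by
  have hn1 : 0 < (n : ℝ) - 1 := sub_pos.2 (Nat.one_lt_cast.2 hn)
  obtain ⟨R, -, hR⟩ := hfsupp
  have hlim : Tendsto ftilde atTop (𝓝 0) :=
    tendsto_const_nhds.congr' ((eventually_ge_atTop R).mono fun r hr => (hR r hr).symm)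
  have hdiff : DifferentiableAt ℝ ftilde (n - 1) :=
    (hfC1.contDiffAt (Ici_mem_nhds hn1)).differentiableAt one_ne_zero
  obtain ⟨ψ, hψ, hψ0, hbdd, heq, hgrowth⟩ :=
    stmt_0_general hn1 hfC1.continuousOn hdiff hc hlim
  exact ⟨ψ, hψ, hψ0, hbdd, heq, by rwa [zero_sub] at hgrowth, neg_neg_of_pos hcpos⟩
end

section
/- Let ψ be a viscosity solution of (E) on (0,∞) and let (a,b) ⊆ (0, n-1) be an open interval on which h < 0. Then ψ is nondecreasing on (a,b), and ψ is differentiable at every r ∈ (a,b) with ψ'(r) = -r·h(r)/(r + (n-1)) ≥ 0. -/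
open Set Filter Topology

/-!
Where `h < 0` and `0 < r < n - 1`, both viscosity inequalities for (E) can be solved for the slope
of the test function: with `g r = -(r * h r) / (r + (n - 1))`, a test function touching `ψ` from
above has slope at least `g r`, and one touching from below has slope at most `g r`. The first fact
relies on `r < n - 1`, which makes nonpositive slopes incompatible with `h r < 0`. A mean value
inequality for one-sided viscosity slopes then bounds the increments of `ψ` near `r` by those of
affine functions of slope `g r ± ε`, so continuity of `g` gives `ψ' = g`.
-/

/-- The viscosity superdifferential of `u` at `x`: the slopes at `x` of the functions touching `u`
from above there. Test functions are required to be differentiable on the whole line. -/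
def viscSuperdiff (u : ℝ → ℝ) (x : ℝ) : Set ℝ :=
  {p | ∃ φ : ℝ → ℝ, Differentiable ℝ φ ∧ IsLocalMax (fun t => u t - φ t) x ∧ deriv φ x = p}

/-- The viscosity subdifferential of `u` at `x`: the slopes at `x` of the functions touching `u`
from below there. Test functions are required to be differentiable on the whole line. -/
def viscSubdiff (u : ℝ → ℝ) (x : ℝ) : Set ℝ :=
  {p | ∃ φ : ℝ → ℝ, Differentiable ℝ φ ∧ IsLocalMin (fun t => u t - φ t) x ∧ deriv φ x = p}

section MeanValue

variable {u : ℝ → ℝ} {x y C : ℝ}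

lemma neg_mem_viscSubdiff {p : ℝ} (hp : p ∈ viscSuperdiff (-u) x) : -p ∈ viscSubdiff u x := by
  obtain ⟨φ, hφ, hmax, rfl⟩ := hp
  refine ⟨-φ, hφ.neg, ?_, deriv.neg⟩
  have hmin : IsLocalMin (fun t => -((-u) t - φ t)) x := hmax.neg
  have heq : (fun t => -((-u) t - φ t)) = fun t => u t - (-φ) t := by
    ext t
    simp only [Pi.neg_apply]
    ring
  rwa [heq] at hmin

lemma deriv_add_mem_viscSuperdiff {f : ℝ → ℝ} (hf : Differentiable ℝ f) {p : ℝ}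
    (hp : p ∈ viscSuperdiff (u - f) x) : deriv f x + p ∈ viscSuperdiff u x := by
  obtain ⟨φ, hφ, hmax, rfl⟩ := hp
  refine ⟨f + φ, hf.add hφ, ?_, deriv_add (hf x) (hφ x)⟩
  simpa only [Pi.sub_apply, Pi.add_apply, sub_sub] using hmax

lemma exists_mem_Ioo_lt_of_continuousOn_of_lt (hu : ContinuousOn u (Icc x y)) (hxy : x < y)
    (hlt : u y < u x) : ∃ z ∈ Ioo x y, u y < u z := by
  have hcont : ContinuousWithinAt u (Ioo x y) x :=
    (hu x (left_mem_Icc.2 hxy.le)).mono Ioo_subset_Icc_self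
  have : (𝓝[Ioo x y] x).NeBot := left_nhdsWithin_Ioo_neBot hxy
  exact (eventually_mem_nhdsWithin.and (hcont.eventually_const_lt hlt)).exists

lemma hasDerivAt_mul_div_pow_succ (M : ℝ) (k : ℕ) (t : ℝ) :
    HasDerivAt (fun s => M * ((y - s) / (y - x)) ^ (k + 1))
      (-(M * ((k + 1) * ((y - t) / (y - x)) ^ k * (y - x)⁻¹))) t := by
  refine ((((hasDerivAt_id t).const_sub y).div_const (y - x)).pow (k + 1)
    |>.const_mul M).congr_deriv ?_
  push_cast
  simp only [id_eq]
  ring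

lemma exists_neg_mem_viscSuperdiff (hu : ContinuousOn u (Icc x y)) (hxy : x < y)
    (hlt : u y < u x) : ∃ r ∈ Ioo x y, ∃ p ∈ viscSuperdiff u r, p < 0 := by
  obtain ⟨z, hz, hzy⟩ := exists_mem_Ioo_lt_of_continuousOn_of_lt hu hxy hlt
  have hM : 0 < u x - u y := sub_pos.2 hlt
  have hL : 0 < y - x := sub_pos.2 hxy
  set θ : ℝ → ℝ := fun t => (y - t) / (y - x)
  have hθ_pos : ∀ t < y, 0 < θ t := fun t ht => div_pos (sub_pos.2 ht) hL
  have hθz : θ z < 1 := (div_lt_one hL).2 (by linarith [hz.1])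
  obtain ⟨k, hk⟩ := exists_pow_lt_of_lt_one (div_pos (sub_pos.2 hzy) hM) hθz
  -- `φ` joins `u x - u y` at `x` to `0` at `y`, so `u - φ` equals `u y` at both endpoints, and it
  -- is steep enough at `x` for `u - φ` to exceed `u y` at `z`.
  set φ : ℝ → ℝ := fun t => (u x - u y) * θ t ^ (k + 1)
  have hφ' := hasDerivAt_mul_div_pow_succ (x := x) (y := y) (u x - u y) k
  have hφ : Differentiable ℝ φ := fun t => (hφ' t).differentiableAt
  have hφx : φ x = u x - u y := by simp [φ, θ, hL.ne']
  have hφy : φ y = 0 := by simp [φ, θ]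
  have hφz : φ z < u z - u y := calc
    φ z ≤ (u x - u y) * θ z ^ k :=
      mul_le_mul_of_nonneg_left
        (pow_le_pow_of_le_one (hθ_pos z hz.2).le hθz.le k.le_succ) hM.le
    _ < u z - u y := (lt_div_iff₀' hM).1 hk
  have hends : ∀ t ∈ Icc x y \ Ioo x y, u t - φ t < u z - φ z := by
    rw [Icc_sdiff_Ioo_same hxy.le]
    rintro t (rfl | rfl) <;> linarith
  obtain ⟨r, hr, hmax⟩ := isCompact_Icc.exists_isLocalMax_mem_open Ioo_subset_Icc_self
    (hu.sub hφ.continuous.continuousOn) (Ioo_subset_Icc_self hz) hends isOpen_Ioo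
  refine ⟨r, hr, deriv φ r, ⟨φ, hφ, hmax, rfl⟩, ?_⟩
  rw [(hφ' r).deriv, neg_lt_zero]
  have := hθ_pos r hr.2
  positivity

theorem mul_sub_le_image_sub_of_le_viscSuperdiff (hu : ContinuousOn u (Icc x y)) (hxy : x ≤ y)
    (hC : ∀ r ∈ Ioo x y, ∀ p ∈ viscSuperdiff u r, C ≤ p) : C * (y - x) ≤ u y - u x := by
  rcases hxy.eq_or_lt with rfl | hxy
  · simp
  by_contra! hlt
  have hlin : Differentiable ℝ fun t : ℝ => C * t := differentiable_id.const_mul C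
  obtain ⟨r, hr, p, hp, hp_neg⟩ := exists_neg_mem_viscSuperdiff
    (hu.sub hlin.continuous.continuousOn) hxy (by simp only [Pi.sub_apply]; linarith)
  have hCp := hC r hr _ (deriv_add_mem_viscSuperdiff hlin hp)
  rw [deriv_const_mul_id'] at hCp
  linarith

theorem monotoneOn_of_viscSuperdiff_nonneg {s : Set ℝ} (hs : s.OrdConnected)
    (hu : ContinuousOn u s) (hnonneg : ∀ r ∈ interior s, ∀ p ∈ viscSuperdiff u r, 0 ≤ p) :
    MonotoneOn u s := by
  intro x hx y hy hxy
  have hIcc : Icc x y ⊆ s := hs.out hx hy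
  have hIoo : Ioo x y ⊆ interior s :=
    isOpen_Ioo.subset_interior_iff.2 (Ioo_subset_Icc_self.trans hIcc)
  have := mul_sub_le_image_sub_of_le_viscSuperdiff (hu.mono hIcc) hxy
    fun r hr => hnonneg r (hIoo hr)
  linarith

theorem image_sub_le_mul_sub_of_viscSubdiff_le (hu : ContinuousOn u (Icc x y)) (hxy : x ≤ y)
    (hC : ∀ r ∈ Ioo x y, ∀ p ∈ viscSubdiff u r, p ≤ C) : u y - u x ≤ C * (y - x) := by
  have := mul_sub_le_image_sub_of_le_viscSuperdiff (C := -C) hu.neg hxy fun r hr p hp =>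
    neg_le.1 (hC r hr _ (neg_mem_viscSubdiff hp))
  simp only [Pi.neg_apply] at this
  linarith

theorem hasDerivAt_of_viscSubdiff_le_of_le_viscSuperdiff {g : ℝ → ℝ} {r : ℝ}
    (hg : ContinuousAt g r) (hu : ∀ᶠ t in 𝓝 r, ContinuousAt u t)
    (hsub : ∀ᶠ t in 𝓝 r, ∀ p ∈ viscSubdiff u t, p ≤ g t)
    (hsuper : ∀ᶠ t in 𝓝 r, ∀ p ∈ viscSuperdiff u t, g t ≤ p) :
    HasDerivAt u (g r) r := by
  rw [hasDerivAt_iff_isLittleO, Asymptotics.isLittleO_iff]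
  intro ε hε
  have hg_lower : ∀ᶠ t in 𝓝 r, g r - ε < g t := hg.eventually_const_lt (by linarith)
  have hg_upper : ∀ᶠ t in 𝓝 r, g t < g r + ε := hg.eventually_lt_const (by linarith)
  obtain ⟨δ, hδ, hball⟩ := Metric.eventually_nhds_iff_ball.1
    (hu.and (hsub.and (hsuper.and (hg_lower.and hg_upper))))
  have hincr : ∀ s ∈ Metric.ball r δ, ∀ t ∈ Metric.ball r δ, s ≤ t →
      (g r - ε) * (t - s) ≤ u t - u s ∧ u t - u s ≤ (g r + ε) * (t - s) := by
    intro s hs t ht hst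
    have hIcc : Icc s t ⊆ Metric.ball r δ := (convex_ball r δ).ordConnected.out hs ht
    have hcont : ContinuousOn u (Icc s t) := fun q hq =>
      (hball q (hIcc hq)).1.continuousWithinAt
    constructor
    · refine mul_sub_le_image_sub_of_le_viscSuperdiff hcont hst fun q hq p hp => ?_
      obtain ⟨-, -, hgp, hgq, -⟩ := hball q (hIcc (Ioo_subset_Icc_self hq))
      exact hgq.le.trans (hgp p hp)
    · refine image_sub_le_mul_sub_of_viscSubdiff_le hcont hst fun q hq p hp => ?_
      obtain ⟨-, hpg, -, -, hgq⟩ := hball q (hIcc (Ioo_subset_Icc_self hq))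
      exact (hpg p hp).trans hgq.le
  filter_upwards [Metric.ball_mem_nhds r hδ] with t ht
  have hr : r ∈ Metric.ball r δ := Metric.mem_ball_self hδ
  rw [smul_eq_mul, Real.norm_eq_abs, Real.norm_eq_abs, abs_le]
  rcases le_total r t with hrt | htr
  · obtain ⟨hlower, hupper⟩ := hincr r hr t ht hrt
    rw [abs_of_nonneg (sub_nonneg.2 hrt)]
    constructor <;> linarith
  · obtain ⟨hlower, hupper⟩ := hincr t ht r hr htr
    rw [abs_of_nonpos (sub_nonpos.2 htr)]
    constructor <;> linarith

end MeanValue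

section Hamiltonian

variable {m r p η : ℝ}

lemma mul_neg_div_mul_sub_abs (hr : r ≠ 0) :
    r * (-(m / r) * p - |p|) = -(m * p + r * |p|) := by
  field_simp
  ring

lemma neg_mul_div_add_le_of_hamiltonian_le (hr : 0 < r) (hrm : r ≤ m) (hη : η < 0)
    (h : -(m / r) * p - |p| ≤ η) : -(r * η) / (r + m) ≤ p := by
  have hscaled : -(r * η) ≤ m * p + r * |p| := by
    have := mul_le_mul_of_nonneg_left h hr.le
    rw [mul_neg_div_mul_sub_abs hr.ne'] at this
    linarith
  have hp : 0 < p := by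
    by_contra! hp
    have hneg : (m - r) * p ≤ 0 := mul_nonpos_of_nonneg_of_nonpos (sub_nonneg.2 hrm) hp
    have hrη : r * η < 0 := mul_neg_of_pos_of_neg hr hη
    rw [abs_of_nonpos hp] at hscaled
    linarith
  rw [abs_of_pos hp] at hscaled
  rw [div_le_iff₀ (by linarith)]
  linarith

lemma le_neg_mul_div_add_of_le_hamiltonian (hr : 0 < r) (hrm : 0 < r + m)
    (h : η ≤ -(m / r) * p - |p|) : p ≤ -(r * η) / (r + m) := by
  have hscaled : m * p + r * |p| ≤ -(r * η) := by
    have := mul_le_mul_of_nonneg_left h hr.le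
    rw [mul_neg_div_mul_sub_abs hr.ne'] at this
    linarith
  have habs : r * p ≤ r * |p| := mul_le_mul_of_nonneg_left (le_abs_self p) hr.le
  rw [le_div_iff₀ hrm]
  linarith

end Hamiltonian

section Equation

variable {n : ℕ} {h ψ : ℝ → ℝ} {I J : Set ℝ} {r p : ℝ}

lemma ViscSolE.mono (hψ : ViscSolE n h I ψ) (hJI : J ⊆ I) : ViscSolE n h J ψ :=
  ⟨fun φ hφ r hr => hψ.1 φ hφ r (hJI hr), fun φ hφ r hr => hψ.2 φ hφ r (hJI hr)⟩

lemma ViscSubsolE.hamiltonian_le (hψ : ViscSubsolE n h I ψ) (hr : r ∈ I)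
    (hp : p ∈ viscSuperdiff ψ r) : -(((n : ℝ) - 1) / r) * p - |p| ≤ h r := by
  obtain ⟨φ, hφ, hmax, rfl⟩ := hp
  exact hψ φ hφ.differentiableOn r hr hmax

lemma ViscSupersolE.le_hamiltonian (hψ : ViscSupersolE n h I ψ) (hr : r ∈ I)
    (hp : p ∈ viscSubdiff ψ r) : h r ≤ -(((n : ℝ) - 1) / r) * p - |p| := by
  obtain ⟨φ, hφ, hmin, rfl⟩ := hp
  exact hψ φ hφ.differentiableOn r hr hmin

end Equation

theorem stmt_2_general (n : ℕ) (h ψ : ℝ → ℝ) (a b : ℝ)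
    (hab : Ioo a b ⊆ Ioo 0 ((n : ℝ) - 1)) (hh : ContinuousOn h (Ioo a b))
    (hneg : ∀ r ∈ Ioo a b, h r < 0) (hψcont : ContinuousOn ψ (Ioo a b))
    (hψ : ViscSolE n h (Ioo a b) ψ) :
    MonotoneOn ψ (Ioo a b) ∧
    ∀ r ∈ Ioo a b,
      HasDerivAt ψ (-(r * h r) / (r + ((n : ℝ) - 1))) r ∧
      0 ≤ -(r * h r) / (r + ((n : ℝ) - 1)) := by
  set g : ℝ → ℝ := fun r => -(r * h r) / (r + ((n : ℝ) - 1))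
  have hden : ∀ r ∈ Ioo a b, 0 < r + ((n : ℝ) - 1) := fun r hr => by
    linarith [(hab hr).1, (hab hr).2]
  have hg_nonneg : ∀ r ∈ Ioo a b, 0 ≤ g r := fun r hr =>
    div_nonneg (neg_nonneg.2 (mul_nonpos_of_nonneg_of_nonpos (hab hr).1.le (hneg r hr).le))
      (hden r hr).le
  have hg : ContinuousOn g (Ioo a b) :=
    (continuousOn_id.mul hh).neg.div (by fun_prop) fun r hr => (hden r hr).ne'
  have hsuper : ∀ r ∈ Ioo a b, ∀ p ∈ viscSuperdiff ψ r, g r ≤ p := fun r hr p hp =>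
    neg_mul_div_add_le_of_hamiltonian_le (hab hr).1 (hab hr).2.le (hneg r hr)
      (hψ.1.hamiltonian_le hr hp)
  have hsub : ∀ r ∈ Ioo a b, ∀ p ∈ viscSubdiff ψ r, p ≤ g r := fun r hr p hp =>
    le_neg_mul_div_add_of_le_hamiltonian (hab hr).1 (hden r hr) (hψ.2.le_hamiltonian hr hp)
  refine ⟨monotoneOn_of_viscSuperdiff_nonneg ordConnected_Ioo hψcont ?_,
    fun r hr => ⟨?_, hg_nonneg r hr⟩⟩
  · rw [interior_Ioo]
    exact fun r hr p hp => (hg_nonneg r hr).trans (hsuper r hr p hp)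
  · have hmem : Ioo a b ∈ 𝓝 r := Ioo_mem_nhds hr.1 hr.2
    have hψ_at : ∀ᶠ t in 𝓝 r, ContinuousAt ψ t := by
      filter_upwards [hmem] with t ht using hψcont.continuousAt (Ioo_mem_nhds ht.1 ht.2)
    exact hasDerivAt_of_viscSubdiff_le_of_le_viscSuperdiff (hg.continuousAt hmem) hψ_at
      (eventually_of_mem hmem hsub) (eventually_of_mem hmem hsuper)

/-- On an interval `(a,b) ⊆ (0,n-1)` where `h < 0`, any viscosity
solution `ψ` of (E) on `(0,∞)` is nondecreasing and differentiable with
`ψ'(r) = -r·h(r)/(r+(n-1)) ≥ 0`. -/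
theorem stmt_2 (n : ℕ) (hn : 2 ≤ n) (ftilde : ℝ → ℝ)
    (hfC1 : ContDiffOn ℝ 1 ftilde (Set.Ici 0))
    (hfnonneg : ∀ r ∈ Set.Ici (0 : ℝ), 0 ≤ ftilde r)
    (hfsupp : ∃ R : ℝ, 0 < R ∧ ∀ r ≥ R, ftilde r = 0)
    (c : ℝ) (hc : IsGreatest (ftilde '' Set.Ici ((n : ℝ) - 1)) c)
    (ψ : ℝ → ℝ) (hψcont : ContinuousOn ψ (Set.Ici 0))
    (hψ : ViscSolE n (fun r => ftilde r - c) (Set.Ioi 0) ψ)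
    (a b : ℝ) (hab : Set.Ioo a b ⊆ Set.Ioo 0 ((n : ℝ) - 1))
    (hneg : ∀ r ∈ Set.Ioo a b, ftilde r - c < 0) :
    MonotoneOn ψ (Set.Ioo a b) ∧
    ∀ r ∈ Set.Ioo a b,
      HasDerivAt ψ (-(r * (ftilde r - c)) / (r + ((n : ℝ) - 1))) r ∧
      0 ≤ -(r * (ftilde r - c)) / (r + ((n : ℝ) - 1)) := by
  have hpos : Ioo a b ⊆ Ioi 0 := fun r hr => (hab hr).1
  exact stmt_2_general n (fun r => ftilde r - c) ψ a b hab
    ((hfC1.continuousOn.sub continuousOn_const).mono (hpos.trans Ioi_subset_Ici_self)) hneg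
    (hψcont.mono (hpos.trans Ioi_subset_Ici_self)) (hψ.mono hpos)
end

section
/- Let (a,b) ⊆ (n-1, ∞) be an open interval and let ψ be a continuous viscosity supersolution of (E) on (a,b). Then ψ is locally Lipschitz on (a,b), i.e., ψ is Lipschitz continuous on every compact subinterval [α,β] ⊂ (a,b). -/
open Set Filter Topology

/-!
Where `r > n - 1` the drift coefficient `(n - 1) / r` is less than `1`, so the Hamiltonian is
coercive: `-((n - 1) / r) p - |p| ≥ m` bounds `|p|`, locally uniformly in `r`. A lower
semicontinuous function on an interval all of whose slopes of contact from below are at least `c`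
makes `u r - c r` nondecreasing: if that function took a smaller value at `y` than at some `x < y`,
adding a small steep increasing exponential would produce an interior minimum to the right of `x`,
at which `u` is touched with slope less than `c`. Applied to `u` and to its reflection, this turns
the gradient bound into a Lipschitz estimate.
-/

/-- The viscosity (Fréchet) subdifferential of `u` at `x`: the slopes at `x` of the functions
touching `u` from below there. The test functions are differentiable on the whole line, so that
they are admissible for equations posed on any subset of it. -/
def viscositySubdifferential (u : ℝ → ℝ) (x : ℝ) : Set ℝ :=
  {p | ∃ φ : ℝ → ℝ, Differentiable ℝ φ ∧ HasDerivAt φ p x ∧ IsLocalMin (fun y => u y - φ y) x}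

theorem neg_mem_viscositySubdifferential_of_comp_neg {u : ℝ → ℝ} {x p : ℝ}
    (hp : p ∈ viscositySubdifferential (fun y => u (-y)) x) :
    -p ∈ viscositySubdifferential u (-x) := by
  obtain ⟨φ, hφ, hφp, hmin⟩ := hp
  refine ⟨fun y => φ (-y), hφ.comp differentiable_neg, ?_, ?_⟩
  · rw [← neg_neg x] at hφp
    simpa [Function.comp_def] using hφp.comp (-x) (hasDerivAt_neg (-x))
  · rw [← neg_neg x] at hmin
    simpa [Function.comp_def] using hmin.comp_continuous continuous_neg.continuousAt

theorem exists_isLocalMin_mem_Ioo_of_lowerSemicontinuousOn {α β : Type*} [TopologicalSpace α]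
    [LinearOrder α] [OrderTopology α] [CompactIccSpace α] [LinearOrder β] {f : α → β} {a b y : α}
    (hf : LowerSemicontinuousOn f (Icc a b)) (hy : y ∈ Icc a b) (hya : f y < f a)
    (hyb : f y < f b) : ∃ x ∈ Ioo a b, IsLocalMin f x := by
  obtain ⟨x, hx, hmin⟩ := hf.exists_isMinOn ⟨y, hy⟩ isCompact_Icc
  have hxa : x ≠ a := by rintro rfl; exact hya.not_ge (hmin hy)
  have hxb : x ≠ b := by rintro rfl; exact hyb.not_ge (hmin hy)
  have hxab : x ∈ Ioo a b := ⟨hx.1.lt_of_ne' hxa, hx.2.lt_of_ne hxb⟩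
  exact ⟨x, hxab, hmin.isLocalMin (Icc_mem_nhds hxab.1 hxab.2)⟩

theorem exists_pos_hasDerivAt_pos_apply_eq_lt_apply {y z δ : ℝ} (hyz : y < z) (hδ : 0 < δ) (A : ℝ) :
    ∃ g g' : ℝ → ℝ, (∀ x, HasDerivAt g (g' x) x) ∧ (∀ x, 0 < g x) ∧ (∀ x, 0 < g' x) ∧
      g y = δ ∧ A < g z := by
  have hlim : Tendsto (fun N => δ * Real.exp (N * (z - y))) atTop atTop :=
    (Real.tendsto_exp_atTop.comp
      (tendsto_id.atTop_mul_const (sub_pos.mpr hyz))).const_mul_atTop hδ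
  obtain ⟨N, hN, hA⟩ := ((eventually_gt_atTop 0).and (hlim.eventually_gt_atTop A)).exists
  refine ⟨fun x => δ * Real.exp (N * (x - y)), fun x => δ * (Real.exp (N * (x - y)) * N),
    fun x => ?_, fun x => by positivity, fun x => by positivity, by simp, hA⟩
  simpa using (((hasDerivAt_id x).sub_const y).const_mul N).exp.const_mul δ

section Interval

variable {s : Set ℝ} {u : ℝ → ℝ}

theorem monotoneOn_sub_mul_of_le_viscositySubdifferential [s.OrdConnected] {c : ℝ}
    (hs : IsOpen s) (hu : LowerSemicontinuousOn u s)
    (hc : ∀ x ∈ s, ∀ p ∈ viscositySubdifferential u x, c ≤ p) :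
    MonotoneOn (fun x => u x - c * x) s := by
  refine fun x hx y hy hxy => not_lt.mp fun hlt => ?_
  have hxy : x < y := hxy.lt_of_ne (by rintro rfl; exact lt_irrefl _ hlt)
  obtain ⟨z, hyz, hz⟩ : ∃ z > y, z ∈ s := (hs.eventually_mem hy).exists_gt
  obtain ⟨δ, hδ, hδx⟩ : ∃ δ, 0 < δ ∧ (u y - c * y) + δ < u x - c * x :=
    ⟨((u x - c * x) - (u y - c * y)) / 2, by linarith, by linarith⟩
  obtain ⟨g, g', hg, hgpos, hg'pos, hgy, hgz⟩ :=
    exists_pos_hasDerivAt_pos_apply_eq_lt_apply hyz hδ ((u y - c * y) + δ - (u z - c * z))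
  let φ : ℝ → ℝ := fun r => c * r - g r
  have hφ (r : ℝ) : HasDerivAt φ (c - g' r) r := (hasDerivAt_const_mul c).sub (hg r)
  have hφdiff : Differentiable ℝ φ := fun r => (hφ r).differentiableAt
  have hsub : Icc x z ⊆ s := s.Icc_subset hx hz
  have hlsc : LowerSemicontinuousOn (fun r => u r - φ r) (Icc x z) := by
    simpa only [sub_eq_add_neg, Pi.neg_apply] using
      (hu.mono hsub).add hφdiff.continuous.neg.continuousOn.lowerSemicontinuousOn
  have hyx_lt : u y - φ y < u x - φ x := by
    dsimp only [φ]
    linarith [hgpos x]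
  have hyz_lt : u y - φ y < u z - φ z := by
    dsimp only [φ]
    linarith
  obtain ⟨r, hr, hmin⟩ :=
    exists_isLocalMin_mem_Ioo_of_lowerSemicontinuousOn hlsc ⟨hxy.le, hyz.le⟩ hyx_lt hyz_lt
  have hcr : c ≤ c - g' r := hc r (hsub (Ioo_subset_Icc_self hr)) _ ⟨φ, hφdiff, hφ r, hmin⟩
  linarith [hg'pos r]

theorem antitoneOn_sub_mul_of_viscositySubdifferential_le [s.OrdConnected] {c : ℝ}
    (hs : IsOpen s) (hu : LowerSemicontinuousOn u s)
    (hc : ∀ x ∈ s, ∀ p ∈ viscositySubdifferential u x, p ≤ c) :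
    AntitoneOn (fun x => u x - c * x) s := by
  have hneg : (-s).OrdConnected := Set.OrdConnected.preimage_anti ‹_› fun _ _ => neg_le_neg
  have hmono : MonotoneOn (fun x => u (-x) - -c * x) (-s) :=
    monotoneOn_sub_mul_of_le_viscositySubdifferential hs.neg
      (hu.comp continuous_neg.continuousOn fun _ hx => hx)
      fun x hx p hp => neg_le.mp (hc (-x) hx (-p) (neg_mem_viscositySubdifferential_of_comp_neg hp))
  intro x hx y hy hxy
  simpa using hmono (neg_mem_neg.mpr hy) (neg_mem_neg.mpr hx) (neg_le_neg hxy)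

theorem lipschitzOnWith_of_abs_viscositySubdifferential_le [s.OrdConnected] {K : NNReal}
    (hs : IsOpen s) (hu : LowerSemicontinuousOn u s)
    (hK : ∀ x ∈ s, ∀ p ∈ viscositySubdifferential u x, |p| ≤ K) : LipschitzOnWith K u s := by
  have hmono : MonotoneOn (fun x => u x - -(K : ℝ) * x) s :=
    monotoneOn_sub_mul_of_le_viscositySubdifferential hs hu
      fun x hx p hp => (abs_le.mp (hK x hx p hp)).1
  have hanti : AntitoneOn (fun x => u x - K * x) s :=
    antitoneOn_sub_mul_of_viscositySubdifferential_le hs hu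
      fun x hx p hp => (abs_le.mp (hK x hx p hp)).2
  refine LipschitzOnWith.of_le_add_mul K fun x hx y hy => ?_
  rw [Real.dist_eq]
  rcases le_total x y with hxy | hyx
  · have hle := hmono hx hy hxy
    rw [abs_of_nonpos (sub_nonpos.mpr hxy)]
    linarith
  · have hle := hanti hy hx hyx
    rw [abs_of_nonneg (sub_nonneg.mpr hyx)]
    linarith

end Interval

theorem ViscSupersolE.le_of_mem_viscositySubdifferential {n : ℕ} {h ψ : ℝ → ℝ} {I : Set ℝ}
    {r p : ℝ} (hψ : ViscSupersolE n h I ψ) (hr : r ∈ I) (hp : p ∈ viscositySubdifferential ψ r) :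
    h r ≤ -(((n : ℝ) - 1) / r) * p - |p| := by
  obtain ⟨φ, hφ, hφp, hmin⟩ := hp
  simpa only [hφp.deriv] using hψ φ hφ.differentiableOn r hr hmin

theorem abs_le_div_of_le_neg_mul_sub_abs {q θ m p : ℝ} (hq : |q| ≤ θ) (hθ : θ < 1)
    (hm : m ≤ -q * p - |p|) : |p| ≤ -m / (1 - θ) := by
  have hqp : -q * p ≤ θ * |p| :=
    calc -q * p ≤ |-q * p| := le_abs_self _
      _ = |q| * |p| := by rw [abs_mul, abs_neg]
      _ ≤ θ * |p| := by gcongr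
  rw [le_div_iff₀ (sub_pos.mpr hθ)]
  linarith

theorem exists_lt_one_eventually_abs_div_le {k r₀ : ℝ} (hr₀ : |k| < r₀) :
    ∃ θ < 1, ∀ᶠ r in 𝓝 r₀, |k / r| ≤ θ := by
  have hpos : 0 < r₀ := (abs_nonneg k).trans_lt hr₀
  have hlt : |k / r₀| < 1 := by rwa [abs_div, abs_of_pos hpos, div_lt_one hpos]
  obtain ⟨θ, hkθ, hθ⟩ := exists_between hlt
  have hcont : ContinuousAt (fun r => |k / r|) r₀ :=
    (continuousAt_const.div continuousAt_id hpos.ne').abs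
  exact ⟨θ, hθ, (hcont.eventually_lt_const hkθ).mono fun _ => le_of_lt⟩

theorem stmt_5_general {n : ℕ} (hn : 1 ≤ n) {h ψ : ℝ → ℝ} {s : Set ℝ} (hs : IsOpen s)
    (hsn : s ⊆ Ioi ((n : ℝ) - 1)) (hh : ∀ r ∈ s, IsBoundedUnder (· ≥ ·) (𝓝 r) h)
    (hψ : LowerSemicontinuousOn ψ s) (hsuper : ViscSupersolE n h s ψ) :
    LocallyLipschitzOn s ψ := by
  intro r₀ hr₀
  have hn0 : 0 ≤ (n : ℝ) - 1 := sub_nonneg.mpr (mod_cast hn)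
  obtain ⟨θ, hθ, hqθ⟩ := exists_lt_one_eventually_abs_div_le (k := (n : ℝ) - 1) (r₀ := r₀)
    (by rw [abs_of_nonneg hn0]; exact hsn hr₀)
  obtain ⟨m, hm⟩ := hh r₀ hr₀
  obtain ⟨l, v, hlv, hsub⟩ := mem_nhds_iff_exists_Ioo_subset.mp
    ((hs.eventually_mem hr₀).and (hqθ.and (eventually_map.mp hm)))
  refine ⟨(-m / (1 - θ)).toNNReal, Ioo l v, mem_nhdsWithin_of_mem_nhds (Ioo_mem_nhds hlv.1 hlv.2),
    lipschitzOnWith_of_abs_viscositySubdifferential_le isOpen_Ioo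
      (hψ.mono fun r hr => (hsub hr).1) fun r hr p hp => ?_⟩
  obtain ⟨hrs, hrθ, hmr⟩ := hsub hr
  exact (abs_le_div_of_le_neg_mul_sub_abs hrθ hθ
    (hmr.trans (hsuper.le_of_mem_viscositySubdifferential hrs hp))).trans (Real.le_coe_toNNReal _)

/-- A continuous viscosity supersolution of (E) on an interval
`(a,b) ⊆ (n-1,∞)` is locally Lipschitz: it is Lipschitz on every compact
subinterval `[α,β] ⊂ (a,b)`. -/
theorem stmt_5 (n : ℕ) (hn : 2 ≤ n) (ftilde : ℝ → ℝ)
    (hfC1 : ContDiffOn ℝ 1 ftilde (Set.Ici 0))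
    (hfnonneg : ∀ r ∈ Set.Ici (0 : ℝ), 0 ≤ ftilde r)
    (hfsupp : ∃ R : ℝ, 0 < R ∧ ∀ r ≥ R, ftilde r = 0)
    (c : ℝ) (hc : IsGreatest (ftilde '' Set.Ici ((n : ℝ) - 1)) c)
    (a b : ℝ) (hab : Set.Ioo a b ⊆ Set.Ioi ((n : ℝ) - 1))
    (ψ : ℝ → ℝ) (hψcont : ContinuousOn ψ (Set.Ioo a b))
    (hψsuper : ViscSupersolE n (fun r => ftilde r - c) (Set.Ioo a b) ψ) :
    ∀ α β : ℝ, a < α → β < b → ∃ K : NNReal, LipschitzOnWith K ψ (Set.Icc α β) := by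
  intro α β hα hβ
  have hpos : ∀ r ∈ Ioo a b, 0 < r := fun r hr =>
    (sub_pos.mpr (Nat.one_lt_cast.mpr hn)).trans (hab hr)
  have hbdd : ∀ r ∈ Ioo a b, IsBoundedUnder (· ≥ ·) (𝓝 r) fun r => ftilde r - c := fun r hr =>
    isBoundedUnder_of_eventually_ge <|
      (eventually_ge_nhds (hpos r hr)).mono fun t ht => sub_le_sub_right (hfnonneg t ht) c
  have hlip : LocallyLipschitzOn (Ioo a b) ψ :=
    stmt_5_general (one_le_two.trans hn) isOpen_Ioo hab hbdd hψcont.lowerSemicontinuousOn hψsuper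
  exact (hlip.mono (Icc_subset_Ioo hα hβ)).exists_lipschitzOnWith_of_compact isCompact_Icc
end

section
/- Assume c > 0, and set r₀ := min{r ≥ n-1 : h(r) = 0} and M := max{r ≥ n-1 : h(r) = 0} (both exist and are finite). Let ψ₁, ψ₂ : [0,∞) → ℝ be continuous viscosity solutions of (E) on (0,∞) which are bounded from above, and assume ψ₁(r₀) = ψ₂(r₀) and ψ₁(M) = ψ₂(M). Then ψ₁ = ψ₂ on [n-1, r₀] ∪ [M, ∞). -/
open Set Filter Topology

/-! On `r > a = n - 1` the equation forces `ψ'` to be one of the two slopes `-h r * r / (r + a) > 0`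
and `h r * r / (r - a) < 0`. A switch from one to the other can only be a convex kink, so a solution
which decreases somewhere on `(a, r₀)` decreases all the way down to `a`, where the negative slope
is not integrable, against continuity at `a`; a solution which increases somewhere on `(M, ∞)`
increases linearly from there on, against boundedness. Both are ruled out by comparison with a
strict barrier. The sign of `ψ'` being known, `ψ` is a classical solution of
`ψ' = -h r * r / (r + a)` on `(a, r₀)` and of `ψ' = h r * r / (r - a)` on `(M, ∞)`, and its values
there follow from that at one endpoint. -/

/-- `p` belongs to the subdifferential of `w` at `z`: it is the slope at `z` of a function touching
`w` from below. The test functions only need to be differentiable near `z`. -/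
def HasSubderivAt (w : ℝ → ℝ) (p z : ℝ) : Prop :=
  ∃ φ : ℝ → ℝ, (∀ᶠ r in 𝓝 z, DifferentiableAt ℝ φ r) ∧ HasDerivAt φ p z ∧
    IsLocalMin (fun r => w r - φ r) z

/-- `p` belongs to the superdifferential of `w` at `z`: it is the slope at `z` of a function
touching `w` from above. The test functions only need to be differentiable near `z`. -/
def HasSuperderivAt (w : ℝ → ℝ) (p z : ℝ) : Prop :=
  ∃ φ : ℝ → ℝ, (∀ᶠ r in 𝓝 z, DifferentiableAt ℝ φ r) ∧ HasDerivAt φ p z ∧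
    IsLocalMax (fun r => w r - φ r) z

/-- Viscosity solutions on `I` of the first-order equation `F(r, w'(r)) = 0`, in terms of sub- and
superdifferentials. -/
structure IsViscositySolution (F : ℝ → ℝ → ℝ) (I : Set ℝ) (w : ℝ → ℝ) : Prop where
  nonpos_of_hasSuperderivAt : ∀ z ∈ I, ∀ p, HasSuperderivAt w p z → F z p ≤ 0
  nonneg_of_hasSubderivAt : ∀ z ∈ I, ∀ p, HasSubderivAt w p z → 0 ≤ F z p

lemma IsViscositySolution.mono {F : ℝ → ℝ → ℝ} {I J : Set ℝ} {w : ℝ → ℝ}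
    (hw : IsViscositySolution F J w) (hIJ : I ⊆ J) : IsViscositySolution F I w :=
  ⟨fun z hz => hw.1 z (hIJ hz), fun z hz => hw.2 z (hIJ hz)⟩

/-- The operator `F(r, p)` for which (E) reads `F(r, ψ'(r)) = 0`, with an arbitrary real number `a`
in place of `n - 1`. -/
noncomputable def radialOperator (a : ℝ) (h : ℝ → ℝ) (r p : ℝ) : ℝ :=
  -(a / r) * p - |p| - h r

section Calculus

lemma exists_differentiable_eventuallyEq {E F : Type*} [NormedAddCommGroup E] [NormedSpace ℝ E]
    [HasContDiffBump E] [NormedAddCommGroup F] [NormedSpace ℝ F] {f : E → F} {z : E}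
    (hf : ∀ᶠ x in 𝓝 z, DifferentiableAt ℝ f x) :
    ∃ g : E → F, Differentiable ℝ g ∧ g =ᶠ[𝓝 z] f := by
  obtain ⟨ε, hε, hball⟩ := Metric.eventually_nhds_iff_ball.1 hf
  let χ : ContDiffBump z := ⟨ε / 4, ε / 2, by positivity, by linarith⟩
  refine ⟨fun x => χ x • f x, fun x => ?_, ?_⟩
  · by_cases hx : x ∈ Metric.ball z ε
    · exact (χ.contDiff (n := 1)).differentiable one_ne_zero x |>.smul (hball x hx)
    · have hx' : x ∉ tsupport χ := fun h =>
        hx (Metric.closedBall_subset_ball (half_lt_self hε) (χ.tsupport_eq ▸ h))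
      have hzero : (fun x => χ x • f x) =ᶠ[𝓝 x] fun _ => 0 := by
        filter_upwards [notMem_tsupport_iff_eventuallyEq.1 hx'] with r hr
        rw [hr, Pi.zero_apply, zero_smul]
      exact (differentiableAt_const 0).congr_of_eventuallyEq hzero
  · filter_upwards [χ.eventuallyEq_one] with r hr
    rw [hr, Pi.one_apply, one_smul]

lemma exists_forall_hasDerivAt_of_continuousOn {E : Type*} [NormedAddCommGroup E]
    [NormedSpace ℝ E] [CompleteSpace E] {f : ℝ → E} {s : Set ℝ} (hf : ContinuousOn f s)
    (hs : IsOpen s) (hs' : s.OrdConnected) : ∃ G : ℝ → E, ∀ z ∈ s, HasDerivAt G (f z) z := by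
  obtain rfl | ⟨x, hx⟩ := s.eq_empty_or_nonempty
  · exact ⟨0, fun z hz => hz.elim⟩
  · exact ⟨fun r => ∫ t in x..r, f t, fun z hz => intervalIntegral.integral_hasDerivAt_right
      (hf.mono (hs'.uIcc_subset hx hz)).intervalIntegrable
      (hf.stronglyMeasurableAtFilter hs z hz) (hf.continuousAt (hs.mem_nhds hz))⟩

lemma eqOn_closure_of_hasDerivAt {𝕜 E : Type*} [RCLike 𝕜] [NormedAddCommGroup E]
    [NormedSpace 𝕜 E] {f g f' : 𝕜 → E} {s : Set 𝕜} {x : 𝕜} (hs : IsOpen s)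
    (hs' : IsPreconnected s) (hf : ContinuousOn f (closure s)) (hg : ContinuousOn g (closure s))
    (hf' : ∀ z ∈ s, HasDerivAt f (f' z) z) (hg' : ∀ z ∈ s, HasDerivAt g (f' z) z)
    (hx : x ∈ closure s) (hfg : f x = g x) : EqOn f g (closure s) := by
  obtain ⟨C, hC⟩ := hs.exists_eq_add_of_deriv_eq hs'
    (fun z hz => (hf' z hz).differentiableAt.differentiableWithinAt)
    (fun z hz => (hg' z hz).differentiableAt.differentiableWithinAt)
    (fun z hz => (hf' z hz).deriv.trans (hg' z hz).deriv.symm)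
  have hclosure : EqOn f (g · + C) (closure s) :=
    hC.of_subset_closure hf (hg.add continuousOn_const) subset_closure subset_rfl
  have hC0 : C = 0 := by simpa [hfg] using hclosure hx
  simpa [hC0] using hclosure

lemma hasDerivAt_of_monotoneOn_of_antitoneOn_sub {w G : ℝ → ℝ} {s : Set ℝ} {p z : ℝ}
    (hs : s ∈ 𝓝 z) (hG : HasDerivAt G p z) (hmono : MonotoneOn (fun r => w r - G r) s)
    (hanti : AntitoneOn (fun r => w r - G r) s) : HasDerivAt w p z := by
  have hz := mem_of_mem_nhds hs
  have hw : w =ᶠ[𝓝 z] fun r => G r + (w z - G z) := by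
    filter_upwards [hs] with r hr
    have hconst : w r - G r = w z - G z := by
      rcases le_total r z with hrz | hzr
      · exact le_antisymm (hmono hr hz hrz) (hanti hr hz hrz)
      · exact le_antisymm (hanti hz hr hzr) (hmono hz hr hzr)
    linarith
  exact (hG.add_const _).congr_of_eventuallyEq hw

lemma exists_isLocalMin_mem_uIoo {f : ℝ → ℝ} {x y m : ℝ} (hf : ContinuousOn f (uIcc x y))
    (hm : m ∈ uIcc x y) (hx : f m < f x) (hy : f m < f y) : ∃ z ∈ uIoo x y, IsLocalMin f z := by
  refine isCompact_uIcc.exists_isLocalMin_mem_open uIoo_subset_uIcc_self hf hm (fun r hr => ?_)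
    isOpen_Ioo
  obtain rfl | rfl : r = x ∨ r = y := by
    by_contra! hne
    exact hr.2 ⟨hr.1.1.lt_of_ne (by grind), hr.1.2.lt_of_ne (by grind)⟩
  exacts [hx, hy]

lemma tendsto_log_sub_nhdsGT (a : ℝ) : Tendsto (fun r => Real.log (r - a)) (𝓝[>] a) atBot := by
  have hsub : Tendsto (fun r => r - a) (𝓝[>] a) (𝓝 0) := by
    simpa using (tendsto_id.sub_const a).mono_left (nhdsWithin_le_nhds (a := a))
  refine Real.tendsto_log_nhdsGT_zero.comp
    (tendsto_nhdsWithin_iff.2 ⟨hsub, eventually_mem_nhdsWithin.mono fun r hr => ?_⟩)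
  exact mem_Ioi.2 (sub_pos.2 hr)

lemma exists_pos_forall_le_of_eventually_le {g : ℝ → ℝ} {x δ : ℝ} (hg : ContinuousOn g (Ici x))
    (hpos : ∀ r ∈ Ici x, 0 < g r) (hδ : 0 < δ) (hlim : ∀ᶠ r in atTop, δ ≤ g r) :
    ∃ κ > 0, ∀ r ∈ Ici x, κ ≤ g r := by
  obtain ⟨R, hR⟩ := eventually_atTop.1 hlim
  obtain ⟨κ, hκ, hκg⟩ := (isCompact_Icc (a := x) (b := R)).exists_forall_le'
    (hg.mono Icc_subset_Ici_self) fun r hr => hpos r hr.1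
  refine ⟨min κ δ, lt_min hκ hδ, fun r hr => ?_⟩
  rcases le_total r R with hrR | hRr
  · exact min_le_of_left_le (hκg r ⟨hr, hrR⟩)
  · exact min_le_of_right_le (hR r hRr)

end Calculus

section Subdifferential

variable {w G p : ℝ → ℝ} {s : Set ℝ}

lemma HasSubderivAt.of_neg {q z : ℝ} (h : HasSubderivAt (fun r => -w r) q z) :
    HasSuperderivAt w (-q) z := by
  obtain ⟨φ, hφ, hq, hmin⟩ := h
  refine ⟨fun r => -φ r, hφ.mono fun r hr => hr.neg, hq.neg, ?_⟩
  filter_upwards [hmin] with r hr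
  linarith

lemma HasSubderivAt.add_of_sub {q q' z : ℝ} (h : HasSubderivAt (fun r => w r - G r) q z)
    (hG : ∀ᶠ r in 𝓝 z, DifferentiableAt ℝ G r) (hG' : HasDerivAt G q' z) :
    HasSubderivAt w (q + q') z := by
  obtain ⟨φ, hφ, hq, hmin⟩ := h
  refine ⟨fun r => φ r + G r, hφ.mp (hG.mono fun r hr hr' => hr'.add hr), hq.add hG', ?_⟩
  filter_upwards [hmin] with r hr
  linarith

lemma HasSuperderivAt.mul_nonneg_of_isMinOn_segment {q y z : ℝ} (h : HasSuperderivAt w q z)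
    (hmin : IsMinOn w (segment ℝ z y) z) : 0 ≤ q * (y - z) := by
  obtain ⟨φ, -, hq, hmax⟩ := h
  have hφ : IsLocalMinOn φ (segment ℝ z y) z := by
    filter_upwards [hmax.filter_mono nhdsWithin_le_nhds, self_mem_nhdsWithin] with r hr hrs
    have : w z ≤ w r := hmin hrs
    linarith
  simpa [mul_comm] using hφ.hasFDerivWithinAt_nonneg hq.hasFDerivAt.hasFDerivWithinAt
    (sub_mem_posTangentConeAt_of_segment_subset subset_rfl)

-- `w` has an interior minimum after subtraction of a bounded exponential which is steep at `x` and
-- almost flat away from it.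
lemma exists_hasSubderivAt_mul_pos {x y : ℝ} (hw : ContinuousOn w (uIcc x y)) (hxy : w x < w y) :
    ∃ z ∈ uIoo x y, ∃ q, HasSubderivAt w q z ∧ 0 < q * (y - x) := by
  have hne : x ≠ y := fun h => hxy.ne (congrArg w h)
  obtain ⟨m, hm, hwm⟩ : (3 * w x + w y) / 4 ∈ w '' uIcc x y :=
    intermediate_value_uIcc hw (Icc_subset_uIcc ⟨by linarith, by linarith⟩)
  have hmx : 0 < (m - x) * (y - x) := by
    have hne' : m ≠ x := by rintro rfl; linarith
    rcases mem_uIcc.1 hm with ⟨h₁, h₂⟩ | ⟨h₁, h₂⟩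
    · exact mul_pos (by grind) (by grind)
    · exact mul_pos_of_neg_of_neg (by grind) (by grind)
  set K := (w y - w x) / 2 with hKdef
  have hK : 0 < K := by linarith
  set L := Real.log 4 / ((m - x) * (y - x)) with hLdef
  set φ : ℝ → ℝ := fun r => -K * Real.exp (-(L * ((r - x) * (y - x)))) with hφdef
  have hφ (r : ℝ) :
      HasDerivAt φ (K * Real.exp (-(L * ((r - x) * (y - x)))) * (L * (y - x))) r :=
    (((((hasDerivAt_id' r).sub_const x).mul_const (y - x)).const_mul L).neg.exp.const_mul
      (-K)).congr_deriv (by simp only [Pi.neg_apply]; ring)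
  have hφx : φ x = -K := by simp [hφdef]
  have hφy : φ y < 0 := by simp only [hφdef]; nlinarith [Real.exp_pos (-(L * ((y - x) * (y - x))))]
  have hφm : φ m = -K / 4 := by
    simp only [hφdef, hLdef, div_mul_cancel₀ _ hmx.ne', Real.exp_neg, Real.exp_log four_pos]
    ring
  obtain ⟨z, hz, hmin⟩ := exists_isLocalMin_mem_uIoo (f := fun r => w r - φ r)
    (hw.sub fun r _ => (hφ r).continuousAt.continuousWithinAt) hm (by linarith) (by linarith)
  refine ⟨z, hz, _, ⟨φ, .of_forall fun r => (hφ r).differentiableAt, hφ z, hmin⟩, ?_⟩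
  have hL : 0 < L := div_pos (Real.log_pos (by norm_num)) hmx
  have hsq : 0 < (y - x) ^ 2 := pow_two_pos_of_ne_zero (sub_ne_zero.2 hne.symm)
  calc 0 < K * L * (y - x) ^ 2 * Real.exp (-(L * ((z - x) * (y - x)))) :=
        mul_pos (mul_pos (mul_pos hK hL) hsq) (Real.exp_pos _)
    _ = _ := by ring

lemma antitoneOn_sub_of_hasSubderivAt_le (hs : IsOpen s) (hs' : s.OrdConnected)
    (hw : ContinuousOn w s) (hG : ∀ z ∈ s, HasDerivAt G (p z) z)
    (hp : ∀ z ∈ s, ∀ q, HasSubderivAt w q z → q ≤ p z) :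
    AntitoneOn (fun r => w r - G r) s := by
  intro x hx y hy hxy
  by_contra! hlt
  have hsub := hs'.uIcc_subset hx hy
  obtain ⟨z, hz, q, hq, hpos⟩ := exists_hasSubderivAt_mul_pos
    ((hw.sub fun r hr => (hG r hr).continuousAt.continuousWithinAt).mono hsub) hlt
  have hzs := hsub (uIoo_subset_uIcc_self hz)
  have := hp z hzs _ (hq.add_of_sub
    ((hs.eventually_mem hzs).mono fun r hr => (hG r hr).differentiableAt) (hG z hzs))
  nlinarith

lemma monotoneOn_sub_of_le_hasSubderivAt (hs : IsOpen s) (hs' : s.OrdConnected)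
    (hw : ContinuousOn w s) (hG : ∀ z ∈ s, HasDerivAt G (p z) z)
    (hp : ∀ z ∈ s, ∀ q, HasSubderivAt w q z → p z ≤ q) :
    MonotoneOn (fun r => w r - G r) s := by
  intro x hx y hy hxy
  by_contra! hlt
  have hsub := hs'.uIcc_subset hy hx
  obtain ⟨z, hz, q, hq, hpos⟩ := exists_hasSubderivAt_mul_pos
    ((hw.sub fun r hr => (hG r hr).continuousAt.continuousWithinAt).mono hsub) hlt
  have hzs := hsub (uIoo_subset_uIcc_self hz)
  have := hp z hzs _ (hq.add_of_sub
    ((hs.eventually_mem hzs).mono fun r hr => (hG r hr).differentiableAt) (hG z hzs))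
  nlinarith

theorem hasDerivAt_of_hasSubderivAt_le_of_le_hasSuperderivAt (hs : IsOpen s) (hs' : s.OrdConnected)
    (hw : ContinuousOn w s) (hp : ContinuousOn p s)
    (hsub : ∀ z ∈ s, ∀ q, HasSubderivAt w q z → q ≤ p z)
    (hsuper : ∀ z ∈ s, ∀ q, HasSuperderivAt w q z → p z ≤ q) :
    ∀ z ∈ s, HasDerivAt w (p z) z := by
  obtain ⟨G, hG⟩ := exists_forall_hasDerivAt_of_continuousOn hp hs hs'
  have hneg : AntitoneOn (fun r => -w r - -G r) s :=
    antitoneOn_sub_of_hasSubderivAt_le hs hs' hw.neg (fun z hz => (hG z hz).neg)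
      fun z hz q hq => le_neg.1 (hsuper z hz _ hq.of_neg)
  have hmono : MonotoneOn (fun r => w r - G r) s := fun x hx y hy hxy => by
    have := hneg hx hy hxy
    dsimp only at this ⊢
    linarith
  exact fun z hz => hasDerivAt_of_monotoneOn_of_antitoneOn_sub (hs.mem_nhds hz) (hG z hz) hmono
    (antitoneOn_sub_of_hasSubderivAt_le hs hs' hw hG hsub)

theorem hasDerivAt_of_le_hasSubderivAt_of_hasSuperderivAt_le (hs : IsOpen s) (hs' : s.OrdConnected)
    (hw : ContinuousOn w s) (hp : ContinuousOn p s)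
    (hsub : ∀ z ∈ s, ∀ q, HasSubderivAt w q z → p z ≤ q)
    (hsuper : ∀ z ∈ s, ∀ q, HasSuperderivAt w q z → q ≤ p z) :
    ∀ z ∈ s, HasDerivAt w (p z) z := by
  obtain ⟨G, hG⟩ := exists_forall_hasDerivAt_of_continuousOn hp hs hs'
  have hneg : MonotoneOn (fun r => -w r - -G r) s :=
    monotoneOn_sub_of_le_hasSubderivAt hs hs' hw.neg (fun z hz => (hG z hz).neg)
      fun z hz q hq => neg_le.1 (hsuper z hz _ hq.of_neg)
  have hanti : AntitoneOn (fun r => w r - G r) s := fun x hx y hy hxy => by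
    have := hneg hx hy hxy
    dsimp only at this ⊢
    linarith
  exact fun z hz => hasDerivAt_of_monotoneOn_of_antitoneOn_sub (hs.mem_nhds hz) (hG z hz)
    (monotoneOn_sub_of_le_hasSubderivAt hs hs' hw hG hsub) hanti

-- If `w u < w v`, then `w - θ Φ` with `θ` small has a maximum strictly between `u` and a point far
-- out along `l`.
lemma le_of_not_hasSuperderivAt_barrier {Φ : ℝ → ℝ} {u v : ℝ} {l : Filter ℝ} [l.NeBot]
    (hw : ContinuousOn w s) (hΦ : ∀ z ∈ s, HasDerivAt Φ (p z) z)
    (hs : ∀ᶠ e in l, v ∈ uIcc u e ∧ uIcc u e ⊆ s) (hwl : l.IsBoundedUnder (· ≤ ·) w)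
    (hΦl : Tendsto Φ l atTop)
    (hp : ∀ θ ∈ Ioo (0 : ℝ) 1, ∀ z ∈ s, ¬ HasSuperderivAt w (θ * p z) z) : w v ≤ w u := by
  by_contra! huv
  obtain ⟨θ, hθv, hθ⟩ : ∃ θ, θ * (Φ v - Φ u) < w v - w u ∧ θ ∈ Ioo (0 : ℝ) 1 := by
    have hlim : Tendsto (fun θ : ℝ => θ * (Φ v - Φ u)) (𝓝[>] 0) (𝓝 0) := by
      simpa using (tendsto_id.mul_const (Φ v - Φ u)).mono_left (nhdsWithin_le_nhds (a := (0 : ℝ)))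
    exact ((hlim.eventually_lt_const (sub_pos.2 huv)).and
      (Ioo_mem_nhdsGT zero_lt_one)).exists
  obtain ⟨C, hC⟩ := hwl
  obtain ⟨e, ⟨hv, hes⟩, hwe, hΦe⟩ := (hs.and ((eventually_map.1 hC).and
    (hΦl.eventually_gt_atTop ((C - (w v - θ * Φ v)) / θ)))).exists
  rw [div_lt_iff₀' hθ.1] at hΦe
  obtain ⟨z, hz, hmin⟩ := exists_isLocalMin_mem_uIoo (f := fun r => θ * Φ r - w r)
    (ContinuousOn.sub (fun r hr => ((hΦ r (hes hr)).const_mul θ).continuousAt.continuousWithinAt)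
      (hw.mono hes)) hv (by linarith) (by linarith)
  have hmax : IsLocalMax (fun r => w r - θ * Φ r) z := by simpa only [neg_sub] using hmin.neg
  have hdiff : ∀ᶠ r in 𝓝 z, DifferentiableAt ℝ (fun r => θ * Φ r) r :=
    (isOpen_Ioo.eventually_mem hz).mono fun r hr =>
      ((hΦ r (hes (uIoo_subset_uIcc_self hr))).const_mul θ).differentiableAt
  have hzs := hes (uIoo_subset_uIcc_self hz)
  exact hp θ hθ z hzs ⟨_, hdiff, (hΦ z hzs).const_mul θ, hmax⟩

end Subdifferential

lemma ViscSolE.isViscositySolution {n : ℕ} {h : ℝ → ℝ} {I : Set ℝ} {ψ : ℝ → ℝ}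
    (hψ : ViscSolE n h I ψ) : IsViscositySolution (radialOperator ((n : ℝ) - 1) h) I ψ where
  nonpos_of_hasSuperderivAt := by
    rintro z hz p ⟨φ, hφ, hp, hmax⟩
    obtain ⟨g, hg, hgφ⟩ := exists_differentiable_eventuallyEq hφ
    have hg' := hψ.1 g hg.differentiableOn z hz
      ((EventuallyEq.rfl.sub hgφ).isLocalMax_iff.2 hmax)
    rw [hgφ.deriv_eq, hp.deriv] at hg'
    exact sub_nonpos.2 hg'
  nonneg_of_hasSubderivAt := by
    rintro z hz p ⟨φ, hφ, hp, hmin⟩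
    obtain ⟨g, hg, hgφ⟩ := exists_differentiable_eventuallyEq hφ
    have hg' := hψ.2 g hg.differentiableOn z hz
      ((EventuallyEq.rfl.sub hgφ).isLocalMin_iff.2 hmin)
    rw [hgφ.deriv_eq, hp.deriv] at hg'
    exact sub_nonneg.2 hg'

section RadialEquation

variable {a b : ℝ} {h ψ ψ₁ ψ₂ : ℝ → ℝ}

lemma radialOperator_mul_self {r p : ℝ} (hr : r ≠ 0) :
    radialOperator a h r p * r = -h r * r - (a * p + r * |p|) := by
  rw [radialOperator]
  field_simp
  ring

lemma radialOperator_nonpos_iff {r p : ℝ} (hr : 0 < r) :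
    radialOperator a h r p ≤ 0 ↔ -h r * r ≤ a * p + r * |p| := by
  rw [← not_lt, ← mul_pos_iff_of_pos_right hr, radialOperator_mul_self hr.ne', sub_pos, not_lt]

lemma radialOperator_nonneg_iff {r p : ℝ} (hr : 0 < r) :
    0 ≤ radialOperator a h r p ↔ a * p + r * |p| ≤ -h r * r := by
  rw [← mul_nonneg_iff_of_pos_right hr, radialOperator_mul_self hr.ne', sub_nonneg]

theorem IsViscositySolution.monotoneOn_Ioo_of_radialOperator
    (hsol : IsViscositySolution (radialOperator a h) (Ioo a b) ψ) (ha : 0 < a)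
    (hh : ContinuousOn h (Ico a b)) (hneg : ∀ r ∈ Ico a b, h r < 0)
    (hψ : ContinuousOn ψ (Ico a b)) : MonotoneOn ψ (Ioo a b) := by
  intro x hx y hy hxy
  have hIcc : Icc a y ⊆ Ico a b := Icc_subset_Ico_right hy.2
  obtain ⟨κ, hκ, hκh⟩ : ∃ κ > 0, ∀ r ∈ Icc a y, κ ≤ -h r :=
    isCompact_Icc.exists_forall_le' (hh.neg.mono hIcc) fun r hr => neg_pos.2 (hneg r (hIcc hr))
  have hΦ : ∀ z ∈ Ioc a y, HasDerivAt (fun r => -(κ * a) * Real.log (r - a))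
      (-(κ * a) * (1 / (z - a))) z := fun z hz =>
    (((hasDerivAt_id z).sub_const a).log (sub_pos.2 hz.1).ne').const_mul _
  have hΦa : Tendsto (fun r => -(κ * a) * Real.log (r - a)) (𝓝[>] a) atTop :=
    (tendsto_log_sub_nhdsGT a).const_mul_atBot_of_neg (neg_neg_of_pos (mul_pos hκ ha))
  have hψa : (𝓝[>] a).IsBoundedUnder (· ≤ ·) ψ := by
    rw [← nhdsWithin_Ioo_eq_nhdsGT (hx.1.trans hx.2)]
    exact ((hψ a ⟨le_rfl, hx.1.trans hx.2⟩).mono Ioo_subset_Ico_self).isBoundedUnder_le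
  refine le_of_not_hasSuperderivAt_barrier (hψ.mono (Ioc_subset_Icc_self.trans hIcc)) hΦ ?_ hψa hΦa
    fun θ hθ z hz hp => ?_
  · filter_upwards [Ioo_mem_nhdsGT hx.1] with e he
    rw [uIcc_of_ge (he.2.le.trans hxy)]
    exact ⟨⟨he.2.le, hxy⟩, Icc_subset_Ioc_iff (he.2.le.trans hxy) |>.2 ⟨he.1, le_rfl⟩⟩
  · have hza : 0 < z - a := sub_pos.2 hz.1
    have hle := (radialOperator_nonpos_iff (ha.trans hz.1)).1
      (hsol.nonpos_of_hasSuperderivAt z ⟨hz.1, hz.2.trans_lt hy.2⟩ _ hp)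
    have hslope : a * (θ * (-(κ * a) * (1 / (z - a)))) + z * |θ * (-(κ * a) * (1 / (z - a)))| =
        θ * (κ * a) := by
      rw [abs_of_nonpos]
      · field_simp; ring
      · have := hθ.1
        have : 0 ≤ θ * (κ * a * (1 / (z - a))) := by positivity
        linarith
    have hκz : κ * a < -h z * z := by
      nlinarith [hκh z ⟨hz.1.le, hz.2⟩, hz.1]
    nlinarith [hθ.2, mul_pos hκ ha]

theorem IsViscositySolution.antitoneOn_Ioi_of_radialOperator
    (hsol : IsViscositySolution (radialOperator a h) (Ioi b) ψ) (ha : 0 ≤ a) (hab : a ≤ b)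
    (hh : ContinuousOn h (Ioi b)) (hneg : ∀ r ∈ Ioi b, h r < 0)
    (hlim : ∃ δ > 0, ∀ᶠ r in atTop, h r ≤ -δ) (hψ : ContinuousOn ψ (Ioi b))
    (hbdd : BddAbove (ψ '' Ioi b)) : AntitoneOn ψ (Ioi b) := by
  intro x hx y _ hxy
  have hIci : Ici x ⊆ Ioi b := Ici_subset_Ioi.2 hx
  obtain ⟨δ, hδ, hlim⟩ := hlim
  obtain ⟨κ, hκ, hκh⟩ : ∃ κ > 0, ∀ r ∈ Ici x, κ ≤ -h r :=
    exists_pos_forall_le_of_eventually_le (hh.neg.mono hIci)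
      (fun r hr => neg_pos.2 (hneg r (hIci hr))) hδ (hlim.mono fun r hr => le_neg.1 hr)
  have hΦ : ∀ z ∈ Ici x, HasDerivAt (fun r => κ / 2 * r) (κ / 2) z := fun z _ => by
    simpa using (hasDerivAt_id z).const_mul (κ / 2)
  obtain ⟨C, hC⟩ := hbdd
  have hψtop : (atTop : Filter ℝ).IsBoundedUnder (· ≤ ·) ψ :=
    ⟨C, eventually_map.2 ((eventually_gt_atTop b).mono fun r hr => hC (mem_image_of_mem ψ hr))⟩
  refine le_of_not_hasSuperderivAt_barrier (hψ.mono hIci) hΦ ?_ hψtop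
    (tendsto_id.const_mul_atTop (half_pos hκ)) fun θ hθ z hz hp => ?_
  · filter_upwards [eventually_ge_atTop y] with e he
    rw [uIcc_of_le (hxy.trans he)]
    exact ⟨⟨hxy, he⟩, Icc_subset_Ici_self⟩
  · have haz : a < z := hab.trans_lt (hIci hz)
    have hle := (radialOperator_nonpos_iff (ha.trans_lt haz)).1
      (hsol.nonpos_of_hasSuperderivAt z (hIci hz) _ hp)
    rw [abs_of_pos (mul_pos hθ.1 (half_pos hκ))] at hle
    have hθκ : θ * κ < -h z := by nlinarith [hκh z hz, hθ.2]
    nlinarith [mul_pos hθ.1 hκ]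

theorem IsViscositySolution.hasDerivAt_of_radialOperator_Ioo
    (hsol : IsViscositySolution (radialOperator a h) (Ioo a b) ψ) (ha : 0 < a)
    (hh : ContinuousOn h (Ico a b)) (hneg : ∀ r ∈ Ico a b, h r < 0)
    (hψ : ContinuousOn ψ (Ico a b)) :
    ∀ r ∈ Ioo a b, HasDerivAt ψ (-h r * r / (r + a)) r := by
  have hmono := hsol.monotoneOn_Ioo_of_radialOperator ha hh hneg hψ
  have hslope : ContinuousOn (fun r => -h r * r / (r + a)) (Ioo a b) :=
    ((hh.mono Ioo_subset_Ico_self).neg.mul continuousOn_id).div (by fun_prop)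
      fun r hr => by linarith [hr.1]
  refine hasDerivAt_of_hasSubderivAt_le_of_le_hasSuperderivAt isOpen_Ioo ordConnected_Ioo
    (hψ.mono Ioo_subset_Ico_self) hslope (fun z hz q hq => ?_) (fun z hz q hq => ?_)
  · have hz0 : 0 < z := ha.trans hz.1
    have hle := (radialOperator_nonneg_iff hz0).1 (hsol.nonneg_of_hasSubderivAt z hz q hq)
    rw [le_div_iff₀ (by linarith)]
    nlinarith [le_abs_self q]
  · have hz0 : 0 < z := ha.trans hz.1
    have hle := (radialOperator_nonpos_iff hz0).1 (hsol.nonpos_of_hasSuperderivAt z hz q hq)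
    obtain ⟨y, hzy, hyb⟩ := exists_between hz.2
    have hq0 : 0 ≤ q := by
      refine nonneg_of_mul_nonneg_left (hq.mul_nonneg_of_isMinOn_segment fun r hr => ?_)
        (sub_pos.2 hzy)
      rw [segment_eq_Icc hzy.le] at hr
      exact hmono hz ⟨hz.1.trans_le hr.1, hr.2.trans_lt hyb⟩ hr.1
    rw [abs_of_nonneg hq0] at hle
    rw [div_le_iff₀ (by linarith)]
    linarith

theorem IsViscositySolution.hasDerivAt_of_radialOperator_Ioi
    (hsol : IsViscositySolution (radialOperator a h) (Ioi b) ψ) (ha : 0 ≤ a) (hab : a ≤ b)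
    (hh : ContinuousOn h (Ioi b)) (hneg : ∀ r ∈ Ioi b, h r < 0)
    (hlim : ∃ δ > 0, ∀ᶠ r in atTop, h r ≤ -δ) (hψ : ContinuousOn ψ (Ioi b))
    (hbdd : BddAbove (ψ '' Ioi b)) :
    ∀ r ∈ Ioi b, HasDerivAt ψ (h r * r / (r - a)) r := by
  have hanti := hsol.antitoneOn_Ioi_of_radialOperator ha hab hh hneg hlim hψ hbdd
  have hlt {r : ℝ} (hr : r ∈ Ioi b) : 0 < r - a := sub_pos.2 (hab.trans_lt hr)
  have hslope : ContinuousOn (fun r => h r * r / (r - a)) (Ioi b) :=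
    (hh.mul continuousOn_id).div (by fun_prop) fun r hr => (hlt hr).ne'
  refine hasDerivAt_of_le_hasSubderivAt_of_hasSuperderivAt_le isOpen_Ioi ordConnected_Ioi hψ
    hslope (fun z hz q hq => ?_) (fun z hz q hq => ?_)
  · have hz0 : 0 < z := by linarith [hlt hz]
    have hle := (radialOperator_nonneg_iff hz0).1 (hsol.nonneg_of_hasSubderivAt z hz q hq)
    rw [div_le_iff₀ (hlt hz)]
    nlinarith [neg_abs_le q]
  · have hz0 : 0 < z := by linarith [hlt hz]
    have hle := (radialOperator_nonpos_iff hz0).1 (hsol.nonpos_of_hasSuperderivAt z hz q hq)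
    obtain ⟨y, hby, hyz⟩ := exists_between (mem_Ioi.1 hz)
    have hq0 : q ≤ 0 := by
      refine nonpos_of_mul_nonneg_left (hq.mul_nonneg_of_isMinOn_segment fun r hr => ?_)
        (sub_neg.2 hyz)
      rw [segment_symm, segment_eq_Icc hyz.le] at hr
      exact hanti (hby.trans_le hr.1) hz hr.2
    rw [abs_of_nonpos hq0] at hle
    rw [le_div_iff₀ (hlt hz)]
    linarith

theorem IsViscositySolution.eqOn_Icc_of_radialOperator
    (hsol₁ : IsViscositySolution (radialOperator a h) (Ioo a b) ψ₁)
    (hsol₂ : IsViscositySolution (radialOperator a h) (Ioo a b) ψ₂) (ha : 0 < a)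
    (hh : ContinuousOn h (Ico a b)) (hneg : ∀ r ∈ Ico a b, h r < 0)
    (hψ₁ : ContinuousOn ψ₁ (Icc a b)) (hψ₂ : ContinuousOn ψ₂ (Icc a b)) (heq : ψ₁ b = ψ₂ b) :
    EqOn ψ₁ ψ₂ (Icc a b) := by
  rcases lt_or_ge a b with hab | hba
  · rw [← closure_Ioo hab.ne] at hψ₁ hψ₂ ⊢
    have hIco : Ico a b ⊆ closure (Ioo a b) := closure_Ioo hab.ne ▸ Ico_subset_Icc_self
    exact eqOn_closure_of_hasDerivAt isOpen_Ioo isPreconnected_Ioo hψ₁ hψ₂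
      (hsol₁.hasDerivAt_of_radialOperator_Ioo ha hh hneg (hψ₁.mono hIco))
      (hsol₂.hasDerivAt_of_radialOperator_Ioo ha hh hneg (hψ₂.mono hIco))
      (closure_Ioo hab.ne ▸ right_mem_Icc.2 hab.le) heq
  · intro r hr
    rwa [le_antisymm hr.2 (hba.trans hr.1)]

theorem IsViscositySolution.eqOn_Ici_of_radialOperator
    (hsol₁ : IsViscositySolution (radialOperator a h) (Ioi b) ψ₁)
    (hsol₂ : IsViscositySolution (radialOperator a h) (Ioi b) ψ₂) (ha : 0 ≤ a) (hab : a ≤ b)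
    (hh : ContinuousOn h (Ioi b)) (hneg : ∀ r ∈ Ioi b, h r < 0)
    (hlim : ∃ δ > 0, ∀ᶠ r in atTop, h r ≤ -δ) (hψ₁ : ContinuousOn ψ₁ (Ici b))
    (hψ₂ : ContinuousOn ψ₂ (Ici b)) (hbdd₁ : BddAbove (ψ₁ '' Ioi b))
    (hbdd₂ : BddAbove (ψ₂ '' Ioi b)) (heq : ψ₁ b = ψ₂ b) :
    EqOn ψ₁ ψ₂ (Ici b) := by
  rw [← closure_Ioi] at hψ₁ hψ₂ ⊢
  exact eqOn_closure_of_hasDerivAt isOpen_Ioi isPreconnected_Ioi hψ₁ hψ₂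
    (hsol₁.hasDerivAt_of_radialOperator_Ioi ha hab hh hneg hlim (hψ₁.mono subset_closure)
      hbdd₁)
    (hsol₂.hasDerivAt_of_radialOperator_Ioi ha hab hh hneg hlim (hψ₂.mono subset_closure)
      hbdd₂)
    (closure_Ioi b ▸ self_mem_Ici) heq

end RadialEquation

theorem stmt_7_general {a r₀ M : ℝ} {h ψ₁ ψ₂ : ℝ → ℝ} (ha : 0 < a)
    (hh : ContinuousOn h (Ici a)) (hnonpos : ∀ r ∈ Ici a, h r ≤ 0)
    (hlim : ∃ δ > 0, ∀ᶠ r in atTop, h r ≤ -δ)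
    (hr₀ : IsLeast {r | a ≤ r ∧ h r = 0} r₀) (hM : IsGreatest {r | a ≤ r ∧ h r = 0} M)
    (hψ₁ : ContinuousOn ψ₁ (Ici a)) (hψ₂ : ContinuousOn ψ₂ (Ici a))
    (hsol₁ : IsViscositySolution (radialOperator a h) (Ioi a) ψ₁)
    (hsol₂ : IsViscositySolution (radialOperator a h) (Ioi a) ψ₂)
    (hbdd₁ : BddAbove (ψ₁ '' Ici a)) (hbdd₂ : BddAbove (ψ₂ '' Ici a))
    (heqr₀ : ψ₁ r₀ = ψ₂ r₀) (heqM : ψ₁ M = ψ₂ M) :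
    EqOn ψ₁ ψ₂ (Icc a r₀ ∪ Ici M) := by
  have hnegr₀ : ∀ r ∈ Ico a r₀, h r < 0 := fun r hr =>
    (hnonpos r hr.1).lt_of_ne fun h0 => hr.2.not_ge (hr₀.2 ⟨hr.1, h0⟩)
  have hIciM : Ici M ⊆ Ici a := Ici_subset_Ici.2 hM.1.1
  have hIoiM : Ioi M ⊆ Ici a := Ioi_subset_Ici_self.trans hIciM
  have hnegM : ∀ r ∈ Ioi M, h r < 0 := fun r hr =>
    (hnonpos r (hIoiM hr)).lt_of_ne fun h0 => (mem_Ioi.1 hr).not_ge (hM.2 ⟨hIoiM hr, h0⟩)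
  have hIoi : Ioi M ⊆ Ioi a := Ioi_subset_Ioi hM.1.1
  have hEqIcc : EqOn ψ₁ ψ₂ (Icc a r₀) :=
    (hsol₁.mono Ioo_subset_Ioi_self).eqOn_Icc_of_radialOperator (hsol₂.mono Ioo_subset_Ioi_self) ha
      (hh.mono Ico_subset_Ici_self) hnegr₀ (hψ₁.mono Icc_subset_Ici_self)
      (hψ₂.mono Icc_subset_Ici_self) heqr₀
  have hEqIci : EqOn ψ₁ ψ₂ (Ici M) :=
    (hsol₁.mono hIoi).eqOn_Ici_of_radialOperator (hsol₂.mono hIoi) ha.le hM.1.1 (hh.mono hIoiM)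
      hnegM hlim (hψ₁.mono hIciM) (hψ₂.mono hIciM) (hbdd₁.mono (image_mono hIoiM))
      (hbdd₂.mono (image_mono hIoiM)) heqM
  exact hEqIcc.union hEqIci

/-- Let `r₀ = min{r ≥ n-1 : h(r) = 0}` and `M = max{r ≥ n-1 : h(r) = 0}`.
Two bounded-from-above continuous viscosity solutions of (E) on `(0,∞)` which agree at
`r₀` and at `M` agree on `[n-1, r₀] ∪ [M, ∞)`. -/
theorem stmt_7 (n : ℕ) (hn : 2 ≤ n) (ftilde : ℝ → ℝ)
    (hfC1 : ContDiffOn ℝ 1 ftilde (Set.Ici 0))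
    (hfnonneg : ∀ r ∈ Set.Ici (0 : ℝ), 0 ≤ ftilde r)
    (hfsupp : ∃ R : ℝ, 0 < R ∧ ∀ r ≥ R, ftilde r = 0)
    (c : ℝ) (hc : IsGreatest (ftilde '' Set.Ici ((n : ℝ) - 1)) c) (hcpos : 0 < c)
    (r₀ M : ℝ)
    (hr₀ : IsLeast {r : ℝ | (n : ℝ) - 1 ≤ r ∧ ftilde r - c = 0} r₀)
    (hM : IsGreatest {r : ℝ | (n : ℝ) - 1 ≤ r ∧ ftilde r - c = 0} M)
    (ψ₁ ψ₂ : ℝ → ℝ)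
    (hψ₁cont : ContinuousOn ψ₁ (Set.Ici 0)) (hψ₂cont : ContinuousOn ψ₂ (Set.Ici 0))
    (hψ₁ : ViscSolE n (fun r => ftilde r - c) (Set.Ioi 0) ψ₁)
    (hψ₂ : ViscSolE n (fun r => ftilde r - c) (Set.Ioi 0) ψ₂)
    (hbd₁ : BddAbove (ψ₁ '' Set.Ici 0)) (hbd₂ : BddAbove (ψ₂ '' Set.Ici 0))
    (heqr₀ : ψ₁ r₀ = ψ₂ r₀) (heqM : ψ₁ M = ψ₂ M) :
    ∀ r ∈ Set.Icc ((n : ℝ) - 1) r₀ ∪ Set.Ici M, ψ₁ r = ψ₂ r := by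
  have ha : 0 < (n : ℝ) - 1 := sub_pos.2 (by exact_mod_cast hn)
  have hIci : Ici ((n : ℝ) - 1) ⊆ Ici 0 := Ici_subset_Ici.2 ha.le
  have hIoi : Ioi ((n : ℝ) - 1) ⊆ Ioi 0 := Ioi_subset_Ioi ha.le
  obtain ⟨R, -, hR⟩ := hfsupp
  exact stmt_7_general (h := fun r => ftilde r - c) ha
    ((hfC1.continuousOn.mono hIci).sub continuousOn_const)
    (fun r hr => sub_nonpos.2 (hc.2 (mem_image_of_mem _ hr)))
    ⟨c, hcpos, (eventually_ge_atTop R).mono fun r hr => by rw [hR r hr, zero_sub]⟩ hr₀ hM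
    (hψ₁cont.mono hIci) (hψ₂cont.mono hIci)
    (hψ₁.isViscositySolution.mono hIoi) (hψ₂.isViscositySolution.mono hIoi)
    (hbd₁.mono (image_mono hIci)) (hbd₂.mono (image_mono hIci)) heqr₀ heqM
end
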